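/- arXiv:2405.00206 — 2 statements merged into one kernel-verified Lean document; each statement's English description precedes it below -/
import Mathlib

section
/- Fix integers n ≥ 1, r ≥ 1, δ ∈ {0,1,…,r}^{n−1}, and d_1, d_2 with d_1 > r(n−1) and d_2 > r(n−1), and set s = 0. Then the number of integer vectors (a_1,b_1,…,a_n,b_n) ∈ ℤ^{2n} that are r-lexicographically increasing n-tuples in the rectangle P_L = [0,d_1]×[0,d_2] and have type δ equals C(d_1 − |δ| + ℓ(δ), ℓ(δ)) · ∏_{k=1}^{c(δ)} C(d_2 − w_k(δ) + r + n_k(δ), n_k(δ)), where C(·,·) denotes the binomial coefficient. -/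
/-!
Both coordinates are shifted so that the count becomes a count of weakly increasing sequences.

If `a` has type `δ` and `p_j = δ_1 + ⋯ + δ_{j-1}`, then `a' = a - p` is weakly increasing, is
constant on each block (a maximal run of indices containing no step with `δ_i = r`), and takes
values in `[0, d_1 - |δ|]`; conversely each such `a'` gives an `a` of type `δ`
(`rlex_hasType_iff`). Such an `a'` is determined by its values at the `ℓ(δ)` block heads, where it
is an arbitrary weakly increasing sequence (`card_blockConst`).

Moreover `max (r - (a_j - a_i)) 0` depends on `a` only through `δ` (`max_gap_eq`), so the
conditions on `b` depend only on `δ`: the lower bound for `b_j` is `Lstat j` and the upper bound is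
`d_2 - Rstat j`, where `Lstat j + Rstat j + r = w(p_j)`. Along a column, `Lstat` grows by `r` at
each step, so `b' = b - Lstat` is weakly increasing on every column with values in
`[0, d_2 - w + r]`, and different columns are independent (`card_fiberMono`).

Finally, weakly increasing sequences of length `m` in `[0, N]` are counted by `C(N + m, m)`: adding
`i` to the `i`-th entry makes them strictly increasing (`card_monotone_box`).
-/

open Finset

noncomputable section

/-- Partial sums `δ_1 + ⋯ + δ_{j-1}` of the type vector `δ`. -/
def pSum (n r : ℕ) (δ : Fin (n - 1) → Fin (r + 1)) (j : Fin n) : ℤ :=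
  ∑ i ∈ univ.filter (fun i : Fin (n - 1) => (i : ℕ) < (j : ℕ)), ((δ i : ℕ) : ℤ)

/-- `|δ| = δ_1 + ⋯ + δ_{n-1}`. -/
def delTotal (n r : ℕ) (δ : Fin (n - 1) → Fin (r + 1)) : ℤ := ∑ i, ((δ i : ℕ) : ℤ)

/-- `ℓ(δ) = 1 + #{i | δ_i = r}`, the number of blocks. -/
def ellStat (n r : ℕ) (δ : Fin (n - 1) → Fin (r + 1)) : ℕ :=
  1 + (univ.filter (fun i : Fin (n - 1) => (δ i : ℕ) = r)).card

/-- The set of distinct values `a_1 < ⋯ < a_{c(δ)}` appearing in the list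
`0, δ_1, δ_1+δ_2, …, δ_1+⋯+δ_{n-1}`. -/
def distinctVals (n r : ℕ) (δ : Fin (n - 1) → Fin (r + 1)) : Finset ℤ :=
  univ.image (pSum n r δ)

/-- `n_k(δ)`: the number of occurrences of the value `v = a_k` in the above list. -/
def nOcc (n r : ℕ) (δ : Fin (n - 1) → Fin (r + 1)) (v : ℤ) : ℕ :=
  (univ.filter (fun j : Fin n => pSum n r δ j = v)).card

/-- `j` is the first index of its block: `j = 1` or `δ_{j-1} = r`. -/
def blockStart (n r : ℕ) (δ : Fin (n - 1) → Fin (r + 1)) (j : Fin n) : Prop :=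
  ∀ hj : 0 < (j : ℕ), ((δ ⟨(j : ℕ) - 1, by have := j.isLt; omega⟩ : ℕ)) = r

/-- `j` is the first index of its column: `j = 1` or `δ_{j-1} ≠ 0`. -/
def colStart (n r : ℕ) (δ : Fin (n - 1) → Fin (r + 1)) (j : Fin n) : Prop :=
  ∀ hj : 0 < (j : ℕ), ((δ ⟨(j : ℕ) - 1, by have := j.isLt; omega⟩ : ℕ)) ≠ 0

/-- The indices `{j, j+1, …, j'}` form a column of `δ`. -/
def IsColumn (n r : ℕ) (δ : Fin (n - 1) → Fin (r + 1)) (j j' : Fin n) : Prop :=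
  j ≤ j' ∧ colStart n r δ j ∧
  (∀ k : Fin n, j ≤ k → k < j' → ∀ h : (k : ℕ) < n - 1, ((δ ⟨(k : ℕ), h⟩ : ℕ)) = 0) ∧
  (∀ h : (j' : ℕ) < n - 1, ((δ ⟨(j' : ℕ), h⟩ : ℕ)) ≠ 0)

/-- `L_C = Σ_{i=1}^{j-1} max{r − (δ_i + ⋯ + δ_{j−1}), 0}` for the column with first
index `j`. -/
def Lstat (n r : ℕ) (δ : Fin (n - 1) → Fin (r + 1)) (j : Fin n) : ℤ :=
  ∑ i ∈ univ.filter (fun i : Fin n => i < j),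
    max ((r : ℤ) - (pSum n r δ j - pSum n r δ i)) 0

/-- `R_C = Σ_{k=j'+1}^{n} max{r − (δ_{j'} + ⋯ + δ_{k−1}), 0}` for the column with last
index `j'`. -/
def Rstat (n r : ℕ) (δ : Fin (n - 1) → Fin (r + 1)) (j' : Fin n) : ℤ :=
  ∑ k ∈ univ.filter (fun k : Fin n => j' < k),
    max ((r : ℤ) - (pSum n r δ k - pSum n r δ j')) 0

/-- `w_k(δ) = Σ_{i=1}^{c(δ)} n_i(δ) · max{r − |a_k − a_i|, 0}`, for `v = a_k`. -/
def wStat (n r : ℕ) (δ : Fin (n - 1) → Fin (r + 1)) (v : ℤ) : ℤ :=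
  ∑ j : Fin n, max ((r : ℤ) - |v - pSum n r δ j|) 0

/-- Binomial coefficient with an integer top argument. -/
def ichoose (a : ℤ) (k : ℕ) : ℕ := a.toNat.choose k

/-- An `r`-lexicographically increasing `n`-tuple of integer points in the trapezoid
`P_L = {(x,y) | 0 ≤ x ≤ d1, 0 ≤ y ≤ d2 + s*x}`: the points are `(a j, b j)` for `j : Fin n`. -/
def RLexIncIn (n : ℕ) (s d1 d2 r : ℤ) (a b : Fin n → ℤ) : Prop :=
  Monotone a ∧
  (∀ i : Fin n, ∀ h : (i : ℕ) + 1 < n,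
      a i = a ⟨(i : ℕ) + 1, h⟩ → b i + r ≤ b ⟨(i : ℕ) + 1, h⟩) ∧
  (∀ h : 0 < n, 0 ≤ a ⟨0, h⟩) ∧
  (∀ h : 0 < n, a ⟨n - 1, by omega⟩ ≤ d1) ∧
  (∀ j : Fin n,
    (∑ i ∈ univ.filter (fun i => i < j), max (r - (a j - a i)) 0) ≤ b j ∧
    b j ≤ d2 + s * a j - ∑ k ∈ univ.filter (fun k => j < k), max (r - (a k - a j)) 0)

/-- The tuple `(a, b)` has type `δ`, i.e. `δ_i = min{a_{i+1} − a_i, r}`. -/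
def HasType (n r : ℕ) (δ : Fin (n - 1) → Fin (r + 1)) (a : Fin n → ℤ) : Prop :=
  ∀ i : Fin (n - 1),
    ((δ i : ℕ) : ℤ) =
      min (a ⟨(i : ℕ) + 1, by have := i.isLt; omega⟩ - a ⟨(i : ℕ), by have := i.isLt; omega⟩)
        (r : ℤ)

/-! ### Counting weakly increasing sequences -/

/-- Adding `i` to the `i`-th entry turns weakly increasing sequences in `[0, N]` into strictly
increasing sequences in `{0, …, N + m - 1}`. -/
def monoBoxEquiv (m : ℕ) (N : ℤ) :
    {f : Fin m → ℤ // Monotone f ∧ ∀ j, 0 ≤ f j ∧ f j ≤ N} ≃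
      (Fin m ↪o Fin (N + (m : ℤ)).toNat) where
  toFun f := OrderEmbedding.ofStrictMono
    (fun i => ⟨(f.1 i + (i : ℕ)).toNat, by
      have := f.2.2 i
      have := i.isLt
      omega⟩)
    (by
      intro i j hij
      have h1 := f.2.1 hij.le
      have h2 := f.2.2 i
      have h3 : (i : ℕ) < (j : ℕ) := hij
      simp only [Fin.mk_lt_mk]
      omega)
  invFun e := ⟨fun i => ((e i : ℕ) : ℤ) - (i : ℕ), by
    have hm : Monotone (fun i : Fin m => ((e i : ℕ) : ℤ) - (i : ℕ)) := by
      cases m with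
      | zero => intro i; exact i.elim0
      | succ m =>
        rw [Fin.monotone_iff_le_succ]
        intro i
        have h : e i.castSucc < e i.succ := e.strictMono Fin.castSucc_lt_succ
        have h' : (e i.castSucc : ℕ) < (e i.succ : ℕ) := h
        simp only [Fin.val_succ, Fin.val_castSucc]
        push_cast
        omega
    refine ⟨hm, fun j => ?_⟩
    cases m with
    | zero => exact j.elim0
    | succ m =>
      have h0 := hm (Fin.zero_le j)
      have h1 := hm (Fin.le_last j)
      have h2 := (e (Fin.last m)).isLt
      simp only [Fin.val_zero, Fin.val_last] at h0 h1
      push_cast at h0 h1 h2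
      change 0 ≤ ((e j : ℕ) : ℤ) - (j : ℕ) ∧ ((e j : ℕ) : ℤ) - (j : ℕ) ≤ N
      omega⟩
  left_inv f := by
    ext i
    have := f.2.2 i
    change (((f.1 i + (i : ℕ)).toNat : ℕ) : ℤ) - (i : ℕ) = f.1 i
    omega
  right_inv e := by
    ext i
    simp

lemma card_monotone_box (α : Type*) [LinearOrder α] [Fintype α] (N : ℤ) :
    Nat.card {f : α → ℤ // Monotone f ∧ ∀ j, 0 ≤ f j ∧ f j ≤ N} =
      ichoose (N + (Fintype.card α : ℤ)) (Fintype.card α) := by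
  have e := Fintype.orderIsoFinOfCardEq α rfl
  have e2 : {f : α → ℤ // Monotone f ∧ ∀ j, 0 ≤ f j ∧ f j ≤ N} ≃
      {f : Fin (Fintype.card α) → ℤ // Monotone f ∧ ∀ j, 0 ≤ f j ∧ f j ≤ N} :=
    (Equiv.arrowCongr e.symm.toEquiv (Equiv.refl ℤ)).subtypeEquiv (by
      intro f
      refine and_congr ⟨fun h => h.comp e.monotone, fun h => ?_⟩
        ⟨fun h j => h _, fun h j => ?_⟩
      · have := h.comp e.symm.monotone
        intro x y hxy
        simpa using this hxy
      · simpa using h (e.symm j))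
  rw [Nat.card_congr (e2.trans (monoBoxEquiv _ N)),
    Nat.card_congr Set.powersetCard.ofFinEmbEquiv, Set.powersetCard.card]
  simp [ichoose]

/-- Functions that are weakly increasing on each fibre of `p` and bounded fibrewise are families of
weakly increasing functions on the fibres. -/
def fiberMonoEquiv {α β : Type*} [LinearOrder α] [Fintype α] [DecidableEq β]
    (p : α → β) (N : β → ℤ) :
    {f : α → ℤ // (∀ j k, p j = p k → j ≤ k → f j ≤ f k) ∧ ∀ j, 0 ≤ f j ∧ f j ≤ N (p j)} ≃
      ∀ v : {v // v ∈ univ.image p},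
        {f : {j // p j = v.1} → ℤ // Monotone f ∧ ∀ j, 0 ≤ f j ∧ f j ≤ N v} where
  toFun f v := ⟨fun j => f.1 j,
    fun j k hjk => f.2.1 _ _ (j.2.trans k.2.symm) hjk, fun j => by
      have := f.2.2 j
      rwa [j.2] at this⟩
  invFun F := ⟨fun j => (F ⟨p j, mem_image_of_mem _ (mem_univ _)⟩).1 ⟨j, rfl⟩, by
    have key : ∀ j v (h : p j = v),
        (F ⟨p j, mem_image_of_mem _ (mem_univ _)⟩).1 ⟨j, rfl⟩ =
          (F ⟨v, h ▸ mem_image_of_mem _ (mem_univ _)⟩).1 ⟨j, h⟩ := by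
      intro j v h
      subst h
      rfl
    refine ⟨fun j k h hjk => ?_, fun j => (F _).2.2 _⟩
    exact (key j _ h).trans_le <| (F _).2.1 hjk⟩
  left_inv f := rfl
  right_inv F := by
    funext v
    obtain ⟨v, hv⟩ := v
    refine Subtype.ext (funext fun j => ?_)
    obtain ⟨j, hj⟩ := j
    change p j = v at hj
    subst hj
    rfl

lemma card_fiberMono {α β : Type*} [LinearOrder α] [Fintype α] [DecidableEq β]
    (p : α → β) (N : β → ℤ) :
    Nat.card {f : α → ℤ //
        (∀ j k, p j = p k → j ≤ k → f j ≤ f k) ∧ ∀ j, 0 ≤ f j ∧ f j ≤ N (p j)} =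
      ∏ v ∈ univ.image p, ichoose (N v + ((univ.filter (fun j => p j = v)).card : ℤ))
        (univ.filter (fun j => p j = v)).card := by
  rw [Nat.card_congr (fiberMonoEquiv p N), Nat.card_pi,
    ← Finset.prod_coe_sort (univ.image p) (fun v =>
      ichoose (N v + ((univ.filter (fun j => p j = v)).card : ℤ))
        (univ.filter (fun j => p j = v)).card)]
  refine Finset.prod_congr rfl fun v _ => ?_
  rw [card_monotone_box, Fintype.card_subtype]

/-! ### Sequences constant on blocks -/

/-- The heads of the blocks of `Fin (m + 1)` cut at the steps satisfying `P`: the index `0` and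
every index following such a step. -/
def headSet (m : ℕ) (P : Fin m → Prop) [DecidablePred P] : Finset (Fin (m + 1)) :=
  insert 0 ((univ.filter P).map (Fin.succEmb m))

lemma headSet_card (m : ℕ) (P : Fin m → Prop) [DecidablePred P] :
    (headSet m P).card = 1 + (univ.filter P).card := by
  rw [headSet, card_insert_of_notMem, card_map, add_comm]
  simp [Fin.succ_ne_zero]

lemma zero_mem_headSet (m : ℕ) (P : Fin m → Prop) [DecidablePred P] : 0 ∈ headSet m P :=
  mem_insert_self _ _

lemma succ_mem_headSet {m : ℕ} {P : Fin m → Prop} [DecidablePred P] (i : Fin m) :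
    i.succ ∈ headSet m P ↔ P i := by
  simp [headSet, Fin.succ_ne_zero]

/-- The head of the block containing `j`, i.e. the last head at or before `j`. -/
def headOf (m : ℕ) (P : Fin m → Prop) [DecidablePred P] (j : Fin (m + 1)) : Fin (m + 1) :=
  ((headSet m P).filter (· ≤ j)).max'
    ⟨0, mem_filter.2 ⟨zero_mem_headSet m P, Fin.zero_le j⟩⟩

section headOf

variable {m : ℕ} {P : Fin m → Prop} [DecidablePred P]

lemma headOf_mem (j : Fin (m + 1)) : headOf m P j ∈ headSet m P :=
  (mem_filter.1 (max'_mem _ _)).1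

lemma headOf_le (j : Fin (m + 1)) : headOf m P j ≤ j :=
  (mem_filter.1 (max'_mem ((headSet m P).filter (· ≤ j)) _)).2

lemma le_headOf {s j : Fin (m + 1)} (hs : s ∈ headSet m P) (h : s ≤ j) : s ≤ headOf m P j :=
  le_max' _ _ (mem_filter.2 ⟨hs, h⟩)

lemma headOf_mono : Monotone (headOf m P) := fun _ _ h =>
  le_headOf (headOf_mem _) ((headOf_le _).trans h)

lemma headOf_of_mem {j : Fin (m + 1)} (h : j ∈ headSet m P) : headOf m P j = j :=
  le_antisymm (headOf_le j) (le_headOf h le_rfl)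

lemma headOf_succ {i : Fin m} (h : ¬ P i) : headOf m P i.succ = headOf m P i.castSucc := by
  refine le_antisymm (le_headOf (headOf_mem _) ?_) (headOf_mono Fin.castSucc_lt_succ.le)
  have h1 : headOf m P i.succ ≠ i.succ := fun e => h ((succ_mem_headSet i).1 (e ▸ headOf_mem _))
  exact Fin.le_castSucc_iff.2 (lt_of_le_of_ne (headOf_le _) h1)

end headOf

/-- Weakly increasing sequences that can only increase at the steps satisfying `P` are determined
by their values at the block heads, which form an arbitrary weakly increasing sequence. -/
def blockConstEquiv (m : ℕ) (P : Fin m → Prop) [DecidablePred P] (N : ℤ) :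
    {f : Fin (m + 1) → ℤ // (∀ i : Fin m, f i.castSucc ≤ f i.succ ∧
        (¬ P i → f i.succ = f i.castSucc)) ∧ ∀ j, 0 ≤ f j ∧ f j ≤ N} ≃
      {g : {j // j ∈ headSet m P} → ℤ // Monotone g ∧ ∀ j, 0 ≤ g j ∧ g j ≤ N} where
  toFun f := ⟨fun j => f.1 j,
    fun _ _ h => (Fin.monotone_iff_le_succ.2 fun i => (f.2.1 i).1) h, fun j => f.2.2 j⟩
  invFun g := ⟨fun j => g.1 ⟨headOf m P j, headOf_mem j⟩,
    fun i => ⟨g.2.1 (headOf_mono Fin.castSucc_lt_succ.le), fun h => by simp only [headOf_succ h]⟩,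
    fun j => g.2.2 _⟩
  left_inv f := by
    ext j
    change f.1 (headOf m P j) = f.1 j
    induction j using Fin.induction with
    | zero => rw [headOf_of_mem (zero_mem_headSet m P)]
    | succ i ih =>
      by_cases h : P i
      · rw [headOf_of_mem ((succ_mem_headSet i).2 h)]
      · rw [headOf_succ h, ih, (f.2.1 i).2 h]
  right_inv g := by
    ext ⟨j, hj⟩
    simp only [headOf_of_mem hj]

lemma card_blockConst (m : ℕ) (P : Fin m → Prop) [DecidablePred P] (N : ℤ) :
    Nat.card {f : Fin (m + 1) → ℤ // (∀ i : Fin m, f i.castSucc ≤ f i.succ ∧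
        (¬ P i → f i.succ = f i.castSucc)) ∧ ∀ j, 0 ≤ f j ∧ f j ≤ N} =
      ichoose (N + ((1 + (univ.filter P).card : ℕ) : ℤ)) (1 + (univ.filter P).card) := by
  rw [Nat.card_congr (blockConstEquiv m P N), card_monotone_box, Fintype.card_coe, headSet_card]

/-! ### Partial sums and the statistics of `δ` -/

section stats

variable {m r : ℕ} (δ : Fin m → Fin (r + 1))

lemma pSum_zero : pSum (m + 1) r δ 0 = 0 := by
  simp [pSum]

lemma pSum_succ (i : Fin m) :
    pSum (m + 1) r δ i.succ = pSum (m + 1) r δ i.castSucc + ((δ i : ℕ) : ℤ) := by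
  have h : (univ.filter (fun k : Fin m => (k : ℕ) < (i.succ : ℕ))) =
      insert i (univ.filter (fun k : Fin m => (k : ℕ) < (i.castSucc : ℕ))) := by
    ext k
    simp only [mem_filter, mem_univ, true_and, mem_insert, Fin.val_succ, Fin.val_castSucc,
      Fin.ext_iff]
    omega
  change ∑ k ∈ univ.filter (fun k : Fin m => (k : ℕ) < (i.succ : ℕ)), ((δ k : ℕ) : ℤ) =
    ∑ k ∈ univ.filter (fun k : Fin m => (k : ℕ) < (i.castSucc : ℕ)), ((δ k : ℕ) : ℤ) + _
  rw [h, sum_insert (by simp), add_comm]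

lemma pSum_last : pSum (m + 1) r δ (Fin.last m) = delTotal (m + 1) r δ := by
  change ∑ k ∈ univ.filter (fun k : Fin m => (k : ℕ) < m), ((δ k : ℕ) : ℤ) = ∑ k : Fin m, _
  rw [filter_true_of_mem fun k _ => k.isLt]

lemma pSum_mono : Monotone (pSum (m + 1) r δ) :=
  Fin.monotone_iff_le_succ.2 fun i => by
    rw [pSum_succ]
    omega

lemma wStat_eq (j : Fin (m + 1)) :
    wStat (m + 1) r δ (pSum (m + 1) r δ j) = Lstat (m + 1) r δ j + r + Rstat (m + 1) r δ j := by
  rw [wStat, Lstat, Rstat, ← sum_filter_add_sum_filter_not univ (fun i => i < j), add_assoc]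
  congr 1
  · refine sum_congr rfl fun i hi => ?_
    have := pSum_mono δ (mem_filter.1 hi).2.le
    rw [abs_of_nonneg (by omega)]
  · have h : univ.filter (fun i => ¬ i < j) = insert j (univ.filter (fun i => j < i)) := by
      ext k
      simp [le_iff_eq_or_lt, eq_comm]
    rw [h, sum_insert (by simp)]
    congr 1
    · simp
    · refine sum_congr rfl fun i hi => ?_
      have := pSum_mono δ (mem_filter.1 hi).2.le
      rw [abs_of_nonpos (by omega), neg_sub]

/-- Within a column, `Lstat` grows by `r` at each step. -/
lemma Lstat_succ (i : Fin m) (h : (δ i : ℕ) = 0) :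
    Lstat (m + 1) r δ i.succ = Lstat (m + 1) r δ i.castSucc + r := by
  have hs : univ.filter (fun k : Fin (m + 1) => k < i.succ) =
      insert i.castSucc (univ.filter (fun k => k < i.castSucc)) := by
    ext k
    simp only [mem_filter, mem_univ, true_and, mem_insert, Fin.lt_def, Fin.val_succ,
      Fin.val_castSucc, Fin.ext_iff]
    omega
  have hp : pSum (m + 1) r δ i.succ = pSum (m + 1) r δ i.castSucc := by
    rw [pSum_succ, h]
    simp
  rw [Lstat, Lstat, hs, sum_insert (by simp), hp, add_comm]
  simp

/-! ### Tuples of a given type -/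

lemma hasType_iff (a : Fin (m + 1) → ℤ) :
    HasType (m + 1) r δ a ↔
      ∀ i : Fin m, ((δ i : ℕ) : ℤ) = min (a i.succ - a i.castSucc) (r : ℤ) :=
  Iff.rfl

variable {δ}

/-- Capping every step at `r` does not change differences capped at `r`, so the overlap terms
depend only on the type. -/
lemma max_gap_eq {a : Fin (m + 1) → ℤ} (ha : HasType (m + 1) r δ a) {i j : Fin (m + 1)}
    (hij : i ≤ j) :
    max ((r : ℤ) - (a j - a i)) 0 =
      max ((r : ℤ) - (pSum (m + 1) r δ j - pSum (m + 1) r δ i)) 0 := by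
  rw [hasType_iff] at ha
  have key : ∀ j : Fin (m + 1), i ≤ j → a i ≤ a j ∧
      max ((r : ℤ) - (a j - a i)) 0 =
        max ((r : ℤ) - (pSum (m + 1) r δ j - pSum (m + 1) r δ i)) 0 := by
    intro j
    induction j using Fin.induction with
    | zero =>
      intro h
      obtain rfl : i = 0 := Fin.le_zero_iff.1 h
      simp
    | succ k ih =>
      intro h
      rcases h.eq_or_lt with rfl | h
      · simp
      · have hk : i ≤ k.castSucc := Fin.le_castSucc_iff.2 h
        have := ih hk
        have h2 := pSum_mono δ hk
        have h3 := ha k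
        rw [pSum_succ]
        omega
  exact (key j hij).2

lemma lex_step_iff (hr : 1 ≤ r) {a b : Fin (m + 1) → ℤ} (ha : HasType (m + 1) r δ a) :
    (∀ i : Fin (m + 1), ∀ h : (i : ℕ) + 1 < m + 1,
      a i = a ⟨(i : ℕ) + 1, h⟩ → b i + r ≤ b ⟨(i : ℕ) + 1, h⟩) ↔
    ∀ j k, pSum (m + 1) r δ j = pSum (m + 1) r δ k → j ≤ k →
      (b - Lstat (m + 1) r δ) j ≤ (b - Lstat (m + 1) r δ) k := by
  rw [hasType_iff] at ha
  constructor
  · intro H j k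
    induction k using Fin.induction with
    | zero =>
      intro _ h
      obtain rfl : j = 0 := Fin.le_zero_iff.1 h
      exact le_rfl
    | succ k ih =>
      intro hp h
      rcases h.eq_or_lt with rfl | h
      · exact le_rfl
      · have hk : j ≤ k.castSucc := Fin.le_castSucc_iff.2 h
        have h1 := pSum_mono δ hk
        have h2 := pSum_succ δ k
        have h3 : (δ k : ℕ) = 0 := by omega
        have h4 := ih (by omega) hk
        have h5 := Lstat_succ δ k h3
        have h6 := ha k
        have h7 : b k.castSucc + r ≤ b k.succ :=
          H k.castSucc (by simp) (show a k.castSucc = a k.succ by omega)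
        simp only [Pi.sub_apply] at h4 ⊢
        omega
  · intro H i h hi
    obtain ⟨k, rfl⟩ : ∃ k : Fin m, i = k.castSucc := ⟨⟨i, by omega⟩, rfl⟩
    change a k.castSucc = a k.succ at hi
    change b k.castSucc + r ≤ b k.succ
    have h6 := ha k
    have h3 : (δ k : ℕ) = 0 := by omega
    have h5 := Lstat_succ δ k h3
    have h7 := H k.castSucc k.succ (by rw [pSum_succ, h3]; simp) Fin.castSucc_lt_succ.le
    simp only [Pi.sub_apply] at h7
    omega

/-- After subtracting the partial sums, sequences of type `δ` are those that increase only at the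
steps with `δ_i = r`. -/
lemma hasType_shift_iff (a : Fin (m + 1) → ℤ) :
    HasType (m + 1) r δ a ↔ ∀ i : Fin m,
      (a - pSum (m + 1) r δ) i.castSucc ≤ (a - pSum (m + 1) r δ) i.succ ∧
      (¬ (δ i : ℕ) = r →
        (a - pSum (m + 1) r δ) i.succ = (a - pSum (m + 1) r δ) i.castSucc) := by
  rw [hasType_iff]
  refine forall_congr' fun i => ?_
  have h := (δ i).isLt
  have h2 := pSum_succ δ i
  simp only [Pi.sub_apply]
  omega

lemma rlex_hasType_iff (hr : 1 ≤ r) (d1 d2 : ℤ) (a b : Fin (m + 1) → ℤ) :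
    (RLexIncIn (m + 1) 0 d1 d2 r a b ∧ HasType (m + 1) r δ a) ↔
      ((∀ i : Fin m,
        (a - pSum (m + 1) r δ) i.castSucc ≤ (a - pSum (m + 1) r δ) i.succ ∧
        (¬ (δ i : ℕ) = r →
          (a - pSum (m + 1) r δ) i.succ = (a - pSum (m + 1) r δ) i.castSucc)) ∧
        ∀ j, 0 ≤ (a - pSum (m + 1) r δ) j ∧
          (a - pSum (m + 1) r δ) j ≤ d1 - delTotal (m + 1) r δ) ∧
      ((∀ j k, pSum (m + 1) r δ j = pSum (m + 1) r δ k → j ≤ k →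
        (b - Lstat (m + 1) r δ) j ≤ (b - Lstat (m + 1) r δ) k) ∧
        ∀ j, 0 ≤ (b - Lstat (m + 1) r δ) j ∧
          (b - Lstat (m + 1) r δ) j ≤ d2 - wStat (m + 1) r δ (pSum (m + 1) r δ j) + r) := by
  rw [← hasType_shift_iff]
  by_cases ha : HasType (m + 1) r δ a
  swap
  · simp [ha]
  have hmono' : Monotone (a - pSum (m + 1) r δ) :=
    Fin.monotone_iff_le_succ.2 fun i => ((hasType_shift_iff a).1 ha i).1
  have hmono : Monotone a := by
    have := hmono'.add (pSum_mono δ)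
    simpa using this
  have hL : ∀ j, ∑ i ∈ univ.filter (fun i => i < j), max ((r : ℤ) - (a j - a i)) 0 =
      Lstat (m + 1) r δ j := fun j =>
    sum_congr rfl fun i hi => max_gap_eq ha (mem_filter.1 hi).2.le
  have hR : ∀ j, ∑ k ∈ univ.filter (fun k => j < k), max ((r : ℤ) - (a k - a j)) 0 =
      Rstat (m + 1) r δ j := fun j =>
    sum_congr rfl fun i hi => max_gap_eq ha (mem_filter.1 hi).2.le
  have hbox : ((∀ h : 0 < m + 1, 0 ≤ a ⟨0, h⟩) ∧
      (∀ h : 0 < m + 1, a ⟨m + 1 - 1, by omega⟩ ≤ d1)) ↔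
      ∀ j, 0 ≤ (a - pSum (m + 1) r δ) j ∧
          (a - pSum (m + 1) r δ) j ≤ d1 - delTotal (m + 1) r δ := by
    have h0 := pSum_zero δ
    have h1 := pSum_last δ
    constructor
    · rintro ⟨h2, h3⟩ j
      have h2 : 0 ≤ a 0 := h2 (Nat.succ_pos m)
      have h3 : a (Fin.last m) ≤ d1 := h3 (Nat.succ_pos m)
      have h4 := hmono' (Fin.zero_le j)
      have h5 := hmono' (Fin.le_last j)
      simp only [Pi.sub_apply] at h4 h5 ⊢
      omega
    · intro H
      have h2 := (H 0).1
      have h3 := (H (Fin.last m)).2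
      simp only [Pi.sub_apply] at h2 h3
      refine ⟨fun _ => ?_, fun _ => ?_⟩
      · change 0 ≤ a 0
        omega
      · change a (Fin.last m) ≤ d1
        omega
  have hb : (∀ j : Fin (m + 1),
      (∑ i ∈ univ.filter (fun i => i < j), max ((r : ℤ) - (a j - a i)) 0) ≤ b j ∧
      b j ≤ d2 + 0 * a j - ∑ k ∈ univ.filter (fun k => j < k), max ((r : ℤ) - (a k - a j)) 0) ↔
      ∀ j, 0 ≤ (b - Lstat (m + 1) r δ) j ∧
        (b - Lstat (m + 1) r δ) j ≤ d2 - wStat (m + 1) r δ (pSum (m + 1) r δ j) + r := by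
    refine forall_congr' fun j => ?_
    rw [hL, hR, wStat_eq]
    simp only [Pi.sub_apply]
    omega
  rw [← hbox, ← hb, ← lex_step_iff hr ha]
  unfold RLexIncIn
  tauto

end stats

/-- type-by-type count, `s = 0`: for `d_1, d_2 > r(n−1)`, the number of
`r`-lexicographically increasing `n`-tuples in the rectangle `[0,d_1]×[0,d_2]` of type `δ`
equals `C(d_1−|δ|+ℓ(δ), ℓ(δ)) · ∏_k C(d_2−w_k(δ)+r+n_k(δ), n_k(δ))`. -/
theorem count_of_type_delta (n : ℕ) (hn : 1 ≤ n) (r : ℕ) (hr : 1 ≤ r)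
    (δ : Fin (n - 1) → Fin (r + 1)) (d1 d2 : ℤ)
    (hd1 : (r : ℤ) * ((n : ℤ) - 1) < d1) (hd2 : (r : ℤ) * ((n : ℤ) - 1) < d2) :
    Set.ncard {p : (Fin n → ℤ) × (Fin n → ℤ) |
        RLexIncIn n 0 d1 d2 (r : ℤ) p.1 p.2 ∧ HasType n r δ p.1} =
      ichoose (d1 - delTotal n r δ + (ellStat n r δ : ℤ)) (ellStat n r δ) *
        ∏ v ∈ distinctVals n r δ,
          ichoose (d2 - wStat n r δ v + (r : ℤ) + (nOcc n r δ v : ℤ)) (nOcc n r δ v) := by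
  obtain ⟨m, rfl⟩ : ∃ m, n = m + 1 := ⟨n - 1, by omega⟩
  change Fin m → Fin (r + 1) at δ
  let A : (Fin (m + 1) → ℤ) → Prop := fun f => (∀ i : Fin m, f i.castSucc ≤ f i.succ ∧
      (¬ (δ i : ℕ) = r → f i.succ = f i.castSucc)) ∧
      ∀ j, 0 ≤ f j ∧ f j ≤ d1 - delTotal (m + 1) r δ
  let B : (Fin (m + 1) → ℤ) → Prop := fun f =>
    (∀ j k, pSum (m + 1) r δ j = pSum (m + 1) r δ k → j ≤ k → f j ≤ f k) ∧
      ∀ j, 0 ≤ f j ∧ f j ≤ d2 - wStat (m + 1) r δ (pSum (m + 1) r δ j) + r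
  have e : {p : (Fin (m + 1) → ℤ) × (Fin (m + 1) → ℤ) //
      RLexIncIn (m + 1) 0 d1 d2 (r : ℤ) p.1 p.2 ∧ HasType (m + 1) r δ p.1} ≃
      {p : (Fin (m + 1) → ℤ) × (Fin (m + 1) → ℤ) // A p.1 ∧ B p.2} :=
    ((Equiv.subRight (pSum (m + 1) r δ)).prodCongr
      (Equiv.subRight (Lstat (m + 1) r δ))).subtypeEquiv
        (fun p => rlex_hasType_iff (δ := δ) hr d1 d2 p.1 p.2)
  rw [← Nat.card_coe_set_eq]
  refine (Nat.card_congr (e.trans Equiv.subtypeProdEquivProd)).trans ?_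
  rw [Nat.card_prod, card_blockConst m (fun i => (δ i : ℕ) = r),
    card_fiberMono (pSum (m + 1) r δ) (fun v => d2 - wStat (m + 1) r δ v + r)]
  rfl

end
end

section
/- Fix integers n ≥ 1, s ≥ 0, r ≥ 1, and d_1, d_2 with d_1 > r(n−1) and d_2 > r(n−1). For δ ∈ {0,1,…,r}^{n−1}, m ∈ {0,1,…,ℓ(δ)}, and m_k ∈ {0,1,…,n_k(δ)} for k = 1,…,c(δ), let K(δ, m, (m_k)) ⊆ ℤ^{2n} be the set of integer vectors (a_1,b_1,…,a_n,b_n) satisfying: (i) a_j = a_i + (δ_i+⋯+δ_{j−1}) for every j ∉ I, where i is the largest element of I with i < j; (ii) all of the ℓ(δ)+1 inequalities 0 ≤ a_{i_1}; a_{i_k} + (δ_{i_k}+⋯+δ_{i_{k+1}−1}) ≤ a_{i_{k+1}} (k = 1,…,ℓ−1); a_{i_ℓ} + (δ_{i_ℓ}+⋯+δ_{n−1}) ≤ d_1, EXCEPT the (m+1)-st one, which is omitted; (iii) for each column C_k = {j,…,j'}, all of the n_k(δ)+1 inequalities L_{C_k} ≤ b_j; b_i + r ≤ b_{i+1} (i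 = j,…,j'−1); b_{j'} ≤ d_2 + s·a_j − R_{C_k}, EXCEPT the (m_k+1)-st one, which is omitted. Then there is a bijection between the disjoint union, over all triples (δ, m, (m_k)), of the sets K(δ, m, (m_k)), and the disjoint union, over all quadruples (n_1,n_2,n_3,n_4) of nonnegative integers with n_1+n_2+n_3+n_4 = n, of the products P^{(1)}_{n_1} × P^{(2)}_{n_2} × P^{(3)}_{n_3} × P^{(4)}_{n_4}, under which the total weight (the sum of all a-coordinates, the sum of all b-coordinates) is preserved. -/
/-!
The bijection passes through points carrying two binary labels.

Omitting one block inequality cuts the chain of blocks into an initial part held by the left wall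
`0 ≤ a` and a final part held by the right wall `a ≤ d1`. Omitting one inequality in a column
likewise cuts it into a lower part held from below and an upper part held from above. Recording
these parts as labels `side` and `top` turns a point of a cone into a sequence of `n` labelled
points, increasing in the lexicographic order by `side`, `a`, `top`, `b` (`vf`). Nothing is lost:
`δ` is the sequence of differences of `a` truncated at `r`, with value `r` between the two sides,
and the labels determine the omitted inequalities. The constants `L_C` and `R_C` become sums of
`max (r - (a_j - a_i)) 0` over all earlier, or later, points on the same side (`Det.lowAll_eq`,
`Det.highAll_eq`), and a bound at an end of a column propagates to all points of that part of the
column (`bridge`). So the cone side is in bijection with the type `LabSide`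
(`vertexToLab_bijective`).

In the four families the sums run only over points with the same value of `top`. For each pair
consisting of a top point `i` and a later bottom point `j` on the same side, adding
`max (r - (a_j - a_i)) 0` to the height of `i` and subtracting it from the height of `j` removes
the superfluous terms from both bounds. These terms depend only on the labels and on `a`, so the
move is invertible; it preserves the sum of heights, and it moves equally labelled points of a
column by the same amount, so the order is preserved (`SepSeq.moved`, `labToSet_bijective`).

Finally an `r`-separated labelled sequence is the same as its set of points, which splits into the
four label classes; these are the tuples of `P^{(1)}, …, P^{(4)}` (`prodToSet_bijective`).
-/

open Finset

noncomputable section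

/-- The number of the block containing `j` (1-based); in particular the `k`-th block start
`i_k` has `blockNum i_k = k`. -/
def blockNum (n r : ℕ) (δ : Fin (n - 1) → Fin (r + 1)) (j : Fin n) : ℕ :=
  1 + (univ.filter (fun i : Fin (n - 1) => (i : ℕ) < (j : ℕ) ∧ ((δ i : ℕ)) = r)).card

/-- Validity of a choice `w` of the numbers `m_k` for the columns: `w` is supported on the
first indices of columns, and `w j ≤ |C|` for the column `C` starting at `j`. -/
def ValidW (n r : ℕ) (δ : Fin (n - 1) → Fin (r + 1)) (w : Fin n → ℕ) : Prop :=
  (∀ j j' : Fin n, IsColumn n r δ j j' → w j ≤ (j' : ℕ) - (j : ℕ) + 1) ∧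
  (∀ j : Fin n, ¬ colStart n r δ j → w j = 0)

/-- The set `K(δ, m, (m_k))`: the conditions of Lemma 4.1 of the paper, where among the
`ℓ(δ)+1` block inequalities (indexed `0,…,ℓ(δ)`: `0 ≤ a_{i_1}` has index `0`, the
inequality between `i_k` and `i_{k+1}` has index `k = blockNum i_k`, the last one has
index `ℓ(δ)`) the `(m+1)`-st (i.e. index `m`) is omitted, and for each column
`C_k = {j,…,j'}` among the `n_k(δ)+1` inequalities (indexed `0,…,|C|`: `L_C ≤ b_j` has
index `0`, `b_i + r ≤ b_{i+1}` has index `i−j+1`, the top one has index `|C| = j'−j+1`)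
the `(m_k+1)`-st (i.e. index `m_k = w j`) is omitted. -/
def Ktype (n r : ℕ) (s d1 d2 : ℤ) (δ : Fin (n - 1) → Fin (r + 1)) (m : ℕ)
    (w : Fin n → ℕ) (a b : Fin n → ℤ) : Prop :=
  -- (i) the equations for `a_j`, `j ∉ I`
  (∀ j : Fin n, ¬ blockStart n r δ j →
      ∀ i : Fin n, blockStart n r δ i → i < j →
        (∀ q : Fin n, blockStart n r δ q → q < j → q ≤ i) →
        a j = a i + (pSum n r δ j - pSum n r δ i)) ∧
  -- (ii) block inequalities, index `m` omitted
  (m ≠ 0 → ∀ h : 0 < n, 0 ≤ a ⟨0, h⟩) ∧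
  (∀ p p' : Fin n, blockStart n r δ p → blockStart n r δ p' → p < p' →
      (∀ q : Fin n, p < q → q < p' → ¬ blockStart n r δ q) →
      blockNum n r δ p ≠ m →
      a p + (pSum n r δ p' - pSum n r δ p) ≤ a p') ∧
  (∀ p : Fin n, blockStart n r δ p → (∀ q : Fin n, p < q → ¬ blockStart n r δ q) →
      m ≠ ellStat n r δ →
      a p + (delTotal n r δ - pSum n r δ p) ≤ d1) ∧
  -- (iii) column inequalities, index `w j` omitted
  (∀ j j' : Fin n, IsColumn n r δ j j' →
      (w j ≠ 0 → Lstat n r δ j ≤ b j) ∧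
      (∀ k : Fin n, j ≤ k → k < j' → ∀ h : (k : ℕ) + 1 < n,
        (k : ℕ) - (j : ℕ) + 1 ≠ w j → b k + (r : ℤ) ≤ b ⟨(k : ℕ) + 1, h⟩) ∧
      ((j' : ℕ) - (j : ℕ) + 1 ≠ w j → b j' ≤ d2 + s * a j - Rstat n r δ j'))

/-- A tuple of `m` integer points in the plane. -/
def Tup (m : ℕ) := (Fin m → ℤ) × (Fin m → ℤ)

/-- The base condition: `a_1 ≤ ⋯ ≤ a_m` and if `a_i = a_{i+1}` then `b_{i+1} ≥ b_i + r`. -/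
def BaseCond (m : ℕ) (r : ℤ) (p : Tup m) : Prop :=
  Monotone p.1 ∧
  (∀ i : Fin m, ∀ h : (i : ℕ) + 1 < m,
      p.1 i = p.1 ⟨(i : ℕ) + 1, h⟩ → p.2 i + r ≤ p.2 ⟨(i : ℕ) + 1, h⟩)

/-- (Left) `0 ≤ a_1`. -/
def CondLeft (m : ℕ) (p : Tup m) : Prop := ∀ h : 0 < m, 0 ≤ p.1 ⟨0, h⟩

/-- (Right) `a_m ≤ d_1`. -/
def CondRight (m : ℕ) (d1 : ℤ) (p : Tup m) : Prop := ∀ h : 0 < m, p.1 ⟨m - 1, by omega⟩ ≤ d1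

/-- (Bottom) `b_j ≥ Σ_{i<j} max{r−(a_j−a_i), 0}` for all `j`. -/
def CondBottom (m : ℕ) (r : ℤ) (p : Tup m) : Prop :=
  ∀ j : Fin m, (∑ i ∈ univ.filter (fun i => i < j), max (r - (p.1 j - p.1 i)) 0) ≤ p.2 j

/-- (Top) `b_j ≤ d_2 + s·a_j − Σ_{k>j} max{r−(a_k−a_j), 0}` for all `j`. -/
def CondTop (m : ℕ) (s d2 r : ℤ) (p : Tup m) : Prop :=
  ∀ j : Fin m,
    p.2 j ≤ d2 + s * p.1 j - ∑ k ∈ univ.filter (fun k => j < k), max (r - (p.1 k - p.1 j)) 0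

/-- Membership in `P^{(1)}_m` (bottom-left): Base, Bottom, Left. -/
def Pmem1 (m : ℕ) (r : ℤ) (p : Tup m) : Prop :=
  BaseCond m r p ∧ CondBottom m r p ∧ CondLeft m p

/-- Membership in `P^{(2)}_m` (bottom-right): Base, Bottom, Right. -/
def Pmem2 (m : ℕ) (r d1 : ℤ) (p : Tup m) : Prop :=
  BaseCond m r p ∧ CondBottom m r p ∧ CondRight m d1 p

/-- Membership in `P^{(3)}_m` (top-right): Base, Top, Right. -/
def Pmem3 (m : ℕ) (r s d1 d2 : ℤ) (p : Tup m) : Prop :=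
  BaseCond m r p ∧ CondTop m s d2 r p ∧ CondRight m d1 p

/-- Membership in `P^{(4)}_m` (top-left): Base, Top, Left. -/
def Pmem4 (m : ℕ) (r s d2 : ℤ) (p : Tup m) : Prop :=
  BaseCond m r p ∧ CondTop m s d2 r p ∧ CondLeft m p

/-- The disjoint union over all `(δ, m, (m_k))` of the sets `K(δ, m, (m_k)) ⊆ ℤ^{2n}`. -/
def VertexConeSide (n r : ℕ) (s d1 d2 : ℤ) :=
  { x : ((Fin (n - 1) → Fin (r + 1)) × ℕ × (Fin n → ℕ)) × ((Fin n → ℤ) × (Fin n → ℤ)) //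
    x.1.2.1 ≤ ellStat n r x.1.1 ∧ ValidW n r x.1.1 x.1.2.2 ∧
      Ktype n r s d1 d2 x.1.1 x.1.2.1 x.1.2.2 x.2.1 x.2.2 }

/-- The disjoint union over all `(n_1,n_2,n_3,n_4)` with `n_1+n_2+n_3+n_4 = n` of the
products `P^{(1)}_{n_1} × P^{(2)}_{n_2} × P^{(3)}_{n_3} × P^{(4)}_{n_4}`. -/
def ProductSide (n : ℕ) (r s d1 d2 : ℤ) :=
  { y : Σ q : ℕ × ℕ × ℕ × ℕ, Tup q.1 × Tup q.2.1 × Tup q.2.2.1 × Tup q.2.2.2 //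
    y.1.1 + y.1.2.1 + y.1.2.2.1 + y.1.2.2.2 = n ∧
    Pmem1 y.1.1 r y.2.1 ∧ Pmem2 y.1.2.1 r d1 y.2.2.1 ∧
    Pmem3 y.1.2.2.1 r s d1 d2 y.2.2.2.1 ∧ Pmem4 y.1.2.2.2 r s d2 y.2.2.2.2 }

/-! ### Labelled points and separated sequences -/

/-- A lattice point `(a, b)` with two labels. `side` is `false` for a point bounded by the left
wall `0 ≤ a` and `true` for one bounded by the right wall `a ≤ d1`; `top` is `false` for a point
bounded from below and `true` for one bounded from above. -/
@[ext] structure LPt where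
  side : Bool
  a : ℤ
  top : Bool
  b : ℤ

/-- The key for the lexicographic order by `side`, `a`, `top`, `b`, with `false < true`. -/
def LPt.key (x : LPt) : Bool ×ₗ (ℤ ×ₗ (Bool ×ₗ ℤ)) :=
  toLex (x.side, toLex (x.a, toLex (x.top, x.b)))

lemma LPt.key_injective : Function.Injective LPt.key := by
  intro x y h
  have h' := congrArg ofLex h
  simp only [LPt.key, ofLex_toLex, Prod.mk.injEq, EmbeddingLike.apply_eq_iff_eq] at h'
  exact LPt.ext h'.1 h'.2.1 h'.2.2.1 h'.2.2.2

instance : LinearOrder LPt := LinearOrder.lift' LPt.key LPt.key_injective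

lemma LPt.lt_iff (x y : LPt) : x < y ↔ x.side < y.side ∨ x.side = y.side ∧
    (x.a < y.a ∨ x.a = y.a ∧ (x.top < y.top ∨ x.top = y.top ∧ x.b < y.b)) := by
  change x.key < y.key ↔ _
  simp only [LPt.key, Prod.Lex.toLex_lt_toLex]

/-- `x` precedes `y`, and if they agree in `side`, `a` and `top` then their heights differ by at
least `r`. -/
def Apart (r : ℤ) (x y : LPt) : Prop :=
  x < y ∧ (x.side = y.side → x.a = y.a → x.top = y.top → x.b + r ≤ y.b)

lemma Apart.trans {r : ℤ} (hr : 0 ≤ r) {x y z : LPt} (h1 : Apart r x y) (h2 : Apart r y z) :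
    Apart r x z := by
  obtain ⟨h1, h1'⟩ := h1
  obtain ⟨h2, h2'⟩ := h2
  refine ⟨h1.trans h2, fun e1 e2 e3 => ?_⟩
  rw [LPt.lt_iff] at h1 h2
  grind

/-- Increasing sequences of labelled points whose terms are pairwise `r`-apart. -/
def SepSeq (r : ℤ) {m : ℕ} (f : Fin m → LPt) : Prop := ∀ i j, i < j → Apart r (f i) (f j)

lemma SepSeq.strictMono {r : ℤ} {m : ℕ} {f : Fin m → LPt} (h : SepSeq r f) : StrictMono f :=
  fun i j hij => (h i j hij).1

/-- Being `r`-apart is transitive, so only consecutive terms have to be compared. -/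
lemma sepSeq_of_succ {r : ℤ} (hr : 0 ≤ r) {m : ℕ} {f : Fin m → LPt}
    (h : ∀ k (hk : k + 1 < m), Apart r (f ⟨k, by omega⟩) (f ⟨k + 1, hk⟩)) : SepSeq r f := by
  have key : ∀ i e (hk : i + e + 1 < m), Apart r (f ⟨i, by omega⟩) (f ⟨i + e + 1, hk⟩) := by
    intro i e
    induction e with
    | zero => intro hk; exact h i hk
    | succ e ih => intro hk; exact (ih (by omega)).trans hr (h (i + e + 1) hk)
  intro i j hij
  have h1 : (i : ℕ) < j := hij
  have := key i (j - i - 1) (by omega)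
  convert this using 2
  ext; simp; omega

/-- Sets of labelled points which are pairwise `r`-apart. -/
def SepSet (r : ℤ) (S : Finset LPt) : Prop := ∀ x ∈ S, ∀ y ∈ S, x < y → Apart r x y

/-- The set of terms of a sequence. -/
def imgSet {m : ℕ} (f : Fin m → LPt) : Finset LPt := univ.image f

lemma mem_imgSet {m : ℕ} {f : Fin m → LPt} {x : LPt} : x ∈ imgSet f ↔ ∃ j, f j = x := by
  simp [imgSet]

lemma SepSeq.sepSet {r : ℤ} {m : ℕ} {f : Fin m → LPt} (h : SepSeq r f) : SepSet r (imgSet f) := by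
  intro x hx y hy hxy
  obtain ⟨i, rfl⟩ := mem_imgSet.1 hx
  obtain ⟨j, rfl⟩ := mem_imgSet.1 hy
  exact h i j (h.strictMono.lt_iff_lt.1 hxy)

lemma SepSeq.card_imgSet {r : ℤ} {m : ℕ} {f : Fin m → LPt} (h : SepSeq r f) :
    (imgSet f).card = m := by
  simp [imgSet, card_image_of_injective _ h.strictMono.injective]

lemma SepSeq.imgSet_inj {r : ℤ} {m : ℕ} {f g : Fin m → LPt} (hf : SepSeq r f) (hg : SepSeq r g)
    (h : imgSet f = imgSet g) : f = g := by
  have h1 := Finset.orderEmbOfFin_unique hf.card_imgSet (fun j => mem_imgSet.2 ⟨j, rfl⟩)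
    hf.strictMono
  have h2 := Finset.orderEmbOfFin_unique hf.card_imgSet
    (fun j => h ▸ mem_imgSet.2 ⟨j, rfl⟩) hg.strictMono
  rw [h1, h2]

lemma SepSet.exists_seq {r : ℤ} {m : ℕ} {S : Finset LPt} (h : SepSet r S) (hS : S.card = m) :
    ∃ f : Fin m → LPt, SepSeq r f ∧ imgSet f = S := by
  refine ⟨S.orderEmbOfFin hS, fun i j hij => ?_, ?_⟩
  · exact h _ (orderEmbOfFin_mem _ _ _) _ (orderEmbOfFin_mem _ _ _) (by simpa using hij)
  · exact Finset.image_orderEmbOfFin_univ S hS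

lemma SepSeq.sum_imgSet {r : ℤ} {m : ℕ} {f : Fin m → LPt} (h : SepSeq r f) (g : LPt → ℤ) :
    ∑ x ∈ imgSet f, g x = ∑ j, g (f j) := by
  rw [imgSet, sum_image (fun i _ j _ e => h.strictMono.injective e)]

/-- The right-hand side of (Bottom) at `x`, where only points with the labels of `x` count. -/
def lowSum (r : ℤ) (S : Finset LPt) (x : LPt) : ℤ :=
  ∑ y ∈ S.filter (fun y => y < x ∧ y.side = x.side ∧ y.top = x.top), max (r - (x.a - y.a)) 0

/-- The sum subtracted in (Top) at `x`, where only points with the labels of `x` count. -/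
def highSum (r : ℤ) (S : Finset LPt) (x : LPt) : ℤ :=
  ∑ y ∈ S.filter (fun y => x < y ∧ y.side = x.side ∧ y.top = x.top), max (r - (y.a - x.a)) 0

lemma SepSeq.lowSum_eq {r : ℤ} {m : ℕ} {f : Fin m → LPt} (h : SepSeq r f) (j : Fin m) :
    lowSum r (imgSet f) (f j) = ∑ i ∈ univ.filter (fun i => i < j ∧ (f i).side = (f j).side ∧
      (f i).top = (f j).top), max (r - ((f j).a - (f i).a)) 0 := by
  rw [lowSum, sum_filter, h.sum_imgSet, sum_filter]
  simp only [h.strictMono.lt_iff_lt]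

lemma SepSeq.highSum_eq {r : ℤ} {m : ℕ} {f : Fin m → LPt} (h : SepSeq r f) (j : Fin m) :
    highSum r (imgSet f) (f j) = ∑ i ∈ univ.filter (fun i => j < i ∧ (f i).side = (f j).side ∧
      (f i).top = (f j).top), max (r - ((f i).a - (f j).a)) 0 := by
  rw [highSum, sum_filter, h.sum_imgSet, sum_filter]
  simp only [h.strictMono.lt_iff_lt]

/-- The wall and height conditions that the labels of `x` ask for, relative to the set `S`. -/
def PtOK (r s d1 d2 : ℤ) (S : Finset LPt) (x : LPt) : Prop :=
  (x.side = false → 0 ≤ x.a) ∧ (x.side = true → x.a ≤ d1) ∧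
  (x.top = false → lowSum r S x ≤ x.b) ∧
  (x.top = true → x.b ≤ d2 + s * x.a - highSum r S x)

/-- `S` encodes a member of `P^{(1)} × P^{(2)} × P^{(3)} × P^{(4)}`, the factors being the four
label classes. -/
def SetOK (r s d1 d2 : ℤ) (S : Finset LPt) : Prop :=
  SepSet r S ∧ ∀ x ∈ S, PtOK r s d1 d2 S x

/-- The points of a tuple, all with the labels `σ` (side) and `t` (top). -/
def lab (σ t : Bool) {m : ℕ} (p : Tup m) (j : Fin m) : LPt := ⟨σ, p.1 j, t, p.2 j⟩

/-- With constant labels, the base condition says that the sequence is separated. -/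
lemma baseCond_iff {r : ℤ} (hr : 1 ≤ r) (σ t : Bool) {m : ℕ} (p : Tup m) :
    BaseCond m r p ↔ SepSeq r (lab σ t p) := by
  constructor
  · rintro ⟨h1, h2⟩
    refine sepSeq_of_succ (by omega) fun k hk => ?_
    have h3 : p.1 ⟨k, by omega⟩ ≤ p.1 ⟨k + 1, hk⟩ := h1 (by simp)
    have h4 := h2 ⟨k, by omega⟩ hk
    simp only [Apart, LPt.lt_iff, lab] at *
    grind
  · intro h
    refine ⟨fun i j hij => ?_, fun i hi e => ?_⟩
    · rcases hij.eq_or_lt with rfl | hij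
      · rfl
      · have := (h i j hij).1
        simp only [LPt.lt_iff, lab] at this
        grind
    · exact (h i ⟨i + 1, hi⟩ (by simp [Fin.lt_def])).2 rfl e rfl

lemma condLeft_iff {r : ℤ} {m : ℕ} (p : Tup m) (h : BaseCond m r p) :
    CondLeft m p ↔ ∀ j, 0 ≤ p.1 j := by
  constructor
  · intro h0 j
    exact (h0 (by have := j.2; omega)).trans (h.1 (by simp [Fin.le_def]))
  · intro h0 hm; exact h0 _

lemma condRight_iff {r : ℤ} {m : ℕ} (d1 : ℤ) (p : Tup m) (h : BaseCond m r p) :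
    CondRight m d1 p ↔ ∀ j, p.1 j ≤ d1 := by
  constructor
  · intro h0 j
    exact le_trans (h.1 (by have := j.2; simp [Fin.le_def]; omega)) (h0 (by have := j.2; omega))
  · intro h0 hm; exact h0 _

lemma condBottom_iff {r : ℤ} {σ t : Bool} {m : ℕ} (p : Tup m) (h : SepSeq r (lab σ t p)) :
    CondBottom m r p ↔ ∀ j, lowSum r (imgSet (lab σ t p)) (lab σ t p j) ≤ p.2 j := by
  simp only [h.lowSum_eq]
  simp [lab, CondBottom]

lemma condTop_iff {r : ℤ} (s d2 : ℤ) {σ t : Bool} {m : ℕ} (p : Tup m)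
    (h : SepSeq r (lab σ t p)) :
    CondTop m s d2 r p ↔ ∀ j, p.2 j ≤ d2 + s * p.1 j -
      highSum r (imgSet (lab σ t p)) (lab σ t p j) := by
  simp only [h.highSum_eq]
  simp [lab, CondTop]

/-- Membership in the one of the four families `P^{(i)}` that belongs to the labels `(σ, t)`; see
`pmem1_iff` to `pmem4_iff`. -/
def TupMem (r s d1 d2 : ℤ) (σ t : Bool) {m : ℕ} (p : Tup m) : Prop :=
  SepSeq r (lab σ t p) ∧ SetOK r s d1 d2 (imgSet (lab σ t p))

lemma tupMem_iff (r s d1 d2 : ℤ) (σ t : Bool) {m : ℕ} (p : Tup m) :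
    TupMem r s d1 d2 σ t p ↔ SepSeq r (lab σ t p) ∧
      ∀ j, PtOK r s d1 d2 (imgSet (lab σ t p)) (lab σ t p j) := by
  constructor
  · rintro ⟨h1, h2, h3⟩
    exact ⟨h1, fun j => h3 _ (mem_imgSet.2 ⟨j, rfl⟩)⟩
  · rintro ⟨h1, h2⟩
    refine ⟨h1, h1.sepSet, fun x hx => ?_⟩
    obtain ⟨j, rfl⟩ := mem_imgSet.1 hx
    exact h2 j

lemma pmem1_iff {r : ℤ} (hr : 1 ≤ r) (s d1 d2 : ℤ) {m : ℕ} (p : Tup m) :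
    Pmem1 m r p ↔ TupMem r s d1 d2 false false p := by
  rw [tupMem_iff, Pmem1, ← baseCond_iff hr]
  refine and_congr_right fun h => ?_
  rw [condLeft_iff p h, condBottom_iff p ((baseCond_iff hr false false p).1 h), ← forall_and]
  refine forall_congr' fun j => ?_
  simp [PtOK, lab, and_comm]

lemma pmem2_iff {r : ℤ} (hr : 1 ≤ r) (s d1 d2 : ℤ) {m : ℕ} (p : Tup m) :
    Pmem2 m r d1 p ↔ TupMem r s d1 d2 true false p := by
  rw [tupMem_iff, Pmem2, ← baseCond_iff hr]
  refine and_congr_right fun h => ?_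
  rw [condRight_iff d1 p h, condBottom_iff p ((baseCond_iff hr true false p).1 h), ← forall_and]
  refine forall_congr' fun j => ?_
  simp [PtOK, lab, and_comm]

lemma pmem3_iff {r : ℤ} (hr : 1 ≤ r) (s d1 d2 : ℤ) {m : ℕ} (p : Tup m) :
    Pmem3 m r s d1 d2 p ↔ TupMem r s d1 d2 true true p := by
  rw [tupMem_iff, Pmem3, ← baseCond_iff hr]
  refine and_congr_right fun h => ?_
  rw [condRight_iff d1 p h, condTop_iff s d2 p ((baseCond_iff hr true true p).1 h),
    ← forall_and]
  refine forall_congr' fun j => ?_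
  simp [PtOK, lab, and_comm]

lemma pmem4_iff {r : ℤ} (hr : 1 ≤ r) (s d1 d2 : ℤ) {m : ℕ} (p : Tup m) :
    Pmem4 m r s d2 p ↔ TupMem r s d1 d2 false true p := by
  rw [tupMem_iff, Pmem4, ← baseCond_iff hr]
  refine and_congr_right fun h => ?_
  rw [condLeft_iff p h, condTop_iff s d2 p ((baseCond_iff hr false true p).1 h), ← forall_and]
  refine forall_congr' fun j => ?_
  simp [PtOK, lab, and_comm]

/-! ### Products of the four families as labelled sets -/

/-- The points of `S` with labels `(σ, t)`. -/
def cls (σ t : Bool) (S : Finset LPt) : Finset LPt :=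
  S.filter (fun x => x.side = σ ∧ x.top = t)

lemma mem_cls {σ t : Bool} {S : Finset LPt} {x : LPt} :
    x ∈ cls σ t S ↔ x ∈ S ∧ x.side = σ ∧ x.top = t := by simp [cls]

lemma lowSum_cls (r : ℤ) (S : Finset LPt) (x : LPt) :
    lowSum r (cls x.side x.top S) x = lowSum r S x := by
  unfold lowSum cls
  rw [filter_filter]
  congr 1
  ext y
  simp only [mem_filter]
  tauto

lemma highSum_cls (r : ℤ) (S : Finset LPt) (x : LPt) :
    highSum r (cls x.side x.top S) x = highSum r S x := by
  unfold highSum cls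
  rw [filter_filter]
  congr 1
  ext y
  simp only [mem_filter]
  tauto

lemma setOK_iff_cls (r s d1 d2 : ℤ) (S : Finset LPt) :
    SetOK r s d1 d2 S ↔ ∀ σ t, SetOK r s d1 d2 (cls σ t S) := by
  constructor
  · rintro ⟨h1, h2⟩ σ t
    refine ⟨fun x hx y hy => h1 x (mem_cls.1 hx).1 y (mem_cls.1 hy).1, fun x hx => ?_⟩
    obtain ⟨hxS, rfl, rfl⟩ := mem_cls.1 hx
    simpa only [PtOK, lowSum_cls, highSum_cls] using h2 x hxS
  · intro h
    refine ⟨fun x hx y hy hxy => ⟨hxy, fun e1 e2 e3 => ?_⟩, fun x hx => ?_⟩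
    · exact ((h x.side x.top).1 x (mem_cls.2 ⟨hx, rfl, rfl⟩) y
        (mem_cls.2 ⟨hy, e1.symm, e3.symm⟩) hxy).2 e1 e2 e3
    · simpa only [PtOK, lowSum_cls, highSum_cls] using
        (h x.side x.top).2 x (mem_cls.2 ⟨hx, rfl, rfl⟩)

lemma sum_cls (S : Finset LPt) {M : Type*} [AddCommMonoid M] (g : LPt → M) :
    ∑ x ∈ S, g x = ∑ x ∈ cls false false S, g x + ∑ x ∈ cls true false S, g x +
      ∑ x ∈ cls true true S, g x + ∑ x ∈ cls false true S, g x := by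
  simp only [cls, sum_filter, ← sum_add_distrib]
  refine sum_congr rfl fun x _ => ?_
  cases x.side <;> cases x.top <;> simp

lemma card_cls (S : Finset LPt) :
    S.card = (cls false false S).card + (cls true false S).card +
      (cls true true S).card + (cls false true S).card := by
  simpa only [card_eq_sum_ones] using sum_cls S (fun _ => 1)

/-- The set of points of a tuple, labelled by `(σ, t)`. -/
def lset (σ t : Bool) {m : ℕ} (p : Tup m) : Finset LPt := imgSet (lab σ t p)

lemma mem_lset {σ t : Bool} {m : ℕ} {p : Tup m} {x : LPt} (h : x ∈ lset σ t p) :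
    x.side = σ ∧ x.top = t := by
  obtain ⟨j, rfl⟩ := mem_imgSet.1 h
  exact ⟨rfl, rfl⟩

lemma exists_tup (r : ℤ) (σ t : Bool) {S : Finset LPt} (h : SepSet r (cls σ t S)) :
    ∃ p : Tup (cls σ t S).card, SepSeq r (lab σ t p) ∧ lset σ t p = cls σ t S := by
  obtain ⟨f, hf, hf'⟩ := h.exists_seq rfl
  have e : lab σ t (m := (cls σ t S).card) (fun j => (f j).a, fun j => (f j).b) = f := by
    funext j
    have := mem_cls.1 (hf' ▸ mem_imgSet.2 ⟨j, rfl⟩ : f j ∈ cls σ t S)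
    exact LPt.ext this.2.1.symm rfl this.2.2.symm rfl
  exact ⟨_, e ▸ hf, (congrArg imgSet e).trans hf'⟩

lemma lset_inj {r : ℤ} {σ t : Bool} {m : ℕ} {p q : Tup m} (hp : SepSeq r (lab σ t p))
    (hq : SepSeq r (lab σ t q)) (h : lset σ t p = lset σ t q) : p = q := by
  have := hp.imgSet_inj hq h
  refine Prod.ext (funext fun j => ?_) (funext fun j => ?_)
  · exact congrArg LPt.a (congrFun this j)
  · exact congrArg LPt.b (congrFun this j)

lemma lset_card {r : ℤ} {σ t : Bool} {m m' : ℕ} {p : Tup m} {q : Tup m'}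
    (hp : SepSeq r (lab σ t p)) (hq : SepSeq r (lab σ t q)) (h : lset σ t p = lset σ t q) :
    m = m' := by
  rw [← hp.card_imgSet, ← hq.card_imgSet]
  exact congrArg card h

/-- The union of four tuples, labelled in the order bottom-left, bottom-right, top-right, top-left
of the families `P^{(1)}, …, P^{(4)}`. -/
def union4 {m1 m2 m3 m4 : ℕ} (p1 : Tup m1) (p2 : Tup m2) (p3 : Tup m3) (p4 : Tup m4) :
    Finset LPt :=
  lset false false p1 ∪ lset true false p2 ∪ lset true true p3 ∪ lset false true p4

section
variable {m1 m2 m3 m4 : ℕ} (p1 : Tup m1) (p2 : Tup m2) (p3 : Tup m3) (p4 : Tup m4)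

lemma cls_union4_ff : cls false false (union4 p1 p2 p3 p4) = lset false false p1 := by
  ext x
  simp only [mem_cls, union4, mem_union]
  have h1 := @mem_lset false false _ p1 x
  have h2 := @mem_lset true false _ p2 x
  have h3 := @mem_lset true true _ p3 x
  have h4 := @mem_lset false true _ p4 x
  grind

lemma cls_union4_tf : cls true false (union4 p1 p2 p3 p4) = lset true false p2 := by
  ext x
  simp only [mem_cls, union4, mem_union]
  have h1 := @mem_lset false false _ p1 x
  have h2 := @mem_lset true false _ p2 x
  have h3 := @mem_lset true true _ p3 x
  have h4 := @mem_lset false true _ p4 x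
  grind

lemma cls_union4_tt : cls true true (union4 p1 p2 p3 p4) = lset true true p3 := by
  ext x
  simp only [mem_cls, union4, mem_union]
  have h1 := @mem_lset false false _ p1 x
  have h2 := @mem_lset true false _ p2 x
  have h3 := @mem_lset true true _ p3 x
  have h4 := @mem_lset false true _ p4 x
  grind

lemma cls_union4_ft : cls false true (union4 p1 p2 p3 p4) = lset false true p4 := by
  ext x
  simp only [mem_cls, union4, mem_union]
  have h1 := @mem_lset false false _ p1 x
  have h2 := @mem_lset true false _ p2 x
  have h3 := @mem_lset true true _ p3 x
  have h4 := @mem_lset false true _ p4 x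
  grind

end

lemma union4_eq {m1 m2 m3 m4 : ℕ} {p1 : Tup m1} {p2 : Tup m2} {p3 : Tup m3} {p4 : Tup m4}
    {S : Finset LPt}
    (h1 : lset false false p1 = cls false false S) (h2 : lset true false p2 = cls true false S)
    (h3 : lset true true p3 = cls true true S) (h4 : lset false true p4 = cls false true S) :
    union4 p1 p2 p3 p4 = S := by
  ext x
  simp only [union4, mem_union, h1, h2, h3, h4, mem_cls]
  cases x.side <;> cases x.top <;> simp

/-- The `n`-element labelled sets encoding the elements of the product side. -/
def SetSide (n : ℕ) (r s d1 d2 : ℤ) := { S : Finset LPt // S.card = n ∧ SetOK r s d1 d2 S }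

/-- An element of the product side, as a labelled set. -/
def prodToSet {n : ℕ} {r s d1 d2 : ℤ} (hr : 1 ≤ r) (y : ProductSide n r s d1 d2) :
    SetSide n r s d1 d2 :=
  ⟨union4 y.1.2.1 y.1.2.2.1 y.1.2.2.2.1 y.1.2.2.2.2, by
    obtain ⟨⟨q, p1, p2, p3, p4⟩, hn, h1, h2, h3, h4⟩ := y
    rw [pmem1_iff hr s d1 d2] at h1
    rw [pmem2_iff hr s d1 d2] at h2
    rw [pmem3_iff hr s d1 d2] at h3
    rw [pmem4_iff hr s d1 d2] at h4
    constructor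
    · rw [card_cls, cls_union4_ff, cls_union4_tf, cls_union4_tt, cls_union4_ft]
      unfold lset
      rw [h1.1.card_imgSet, h2.1.card_imgSet, h3.1.card_imgSet, h4.1.card_imgSet]
      exact hn
    · rw [setOK_iff_cls]
      rintro (_ | _) (_ | _)
      · rw [cls_union4_ff]; exact h1.2
      · rw [cls_union4_ft]; exact h4.2
      · rw [cls_union4_tf]; exact h2.2
      · rw [cls_union4_tt]; exact h3.2⟩

lemma prodToSet_bijective {n : ℕ} {r s d1 d2 : ℤ} (hr : 1 ≤ r) :
    Function.Bijective (prodToSet (n := n) (s := s) (d1 := d1) (d2 := d2) hr) := by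
  constructor
  · rintro ⟨⟨⟨m1, m2, m3, m4⟩, p1, p2, p3, p4⟩, hn, h1, h2, h3, h4⟩
      ⟨⟨⟨m1', m2', m3', m4'⟩, p1', p2', p3', p4'⟩, hn', h1', h2', h3', h4'⟩ e
    have e' : union4 p1 p2 p3 p4 = union4 p1' p2' p3' p4' := congrArg Subtype.val e
    have e1 := congrArg (cls false false) e'
    have e2 := congrArg (cls true false) e'
    have e3 := congrArg (cls true true) e'
    have e4 := congrArg (cls false true) e'
    rw [cls_union4_ff, cls_union4_ff] at e1
    rw [cls_union4_tf, cls_union4_tf] at e2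
    rw [cls_union4_tt, cls_union4_tt] at e3
    rw [cls_union4_ft, cls_union4_ft] at e4
    have s1 := ((pmem1_iff hr s d1 d2 _).1 h1).1
    have s2 := ((pmem2_iff hr s d1 d2 _).1 h2).1
    have s3 := ((pmem3_iff hr s d1 d2 _).1 h3).1
    have s4 := ((pmem4_iff hr s d1 d2 _).1 h4).1
    have s1' := ((pmem1_iff hr s d1 d2 _).1 h1').1
    have s2' := ((pmem2_iff hr s d1 d2 _).1 h2').1
    have s3' := ((pmem3_iff hr s d1 d2 _).1 h3').1
    have s4' := ((pmem4_iff hr s d1 d2 _).1 h4').1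
    obtain rfl : m1 = m1' := lset_card s1 s1' e1
    obtain rfl : m2 = m2' := lset_card s2 s2' e2
    obtain rfl : m3 = m3' := lset_card s3 s3' e3
    obtain rfl : m4 = m4' := lset_card s4 s4' e4
    obtain rfl := lset_inj s1 s1' e1
    obtain rfl := lset_inj s2 s2' e2
    obtain rfl := lset_inj s3 s3' e3
    obtain rfl := lset_inj s4 s4' e4
    rfl
  · rintro ⟨S, hn, hS⟩
    have hS' := (setOK_iff_cls r s d1 d2 S).1 hS
    obtain ⟨p1, s1, e1⟩ := exists_tup r false false (hS' false false).1
    obtain ⟨p2, s2, e2⟩ := exists_tup r true false (hS' true false).1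
    obtain ⟨p3, s3, e3⟩ := exists_tup r true true (hS' true true).1
    obtain ⟨p4, s4, e4⟩ := exists_tup r false true (hS' false true).1
    have t1 : TupMem r s d1 d2 false false p1 := ⟨s1, by
      change SetOK _ _ _ _ (lset _ _ p1); rw [e1]; exact hS' _ _⟩
    have t2 : TupMem r s d1 d2 true false p2 := ⟨s2, by
      change SetOK _ _ _ _ (lset _ _ p2); rw [e2]; exact hS' _ _⟩
    have t3 : TupMem r s d1 d2 true true p3 := ⟨s3, by
      change SetOK _ _ _ _ (lset _ _ p3); rw [e3]; exact hS' _ _⟩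
    have t4 : TupMem r s d1 d2 false true p4 := ⟨s4, by
      change SetOK _ _ _ _ (lset _ _ p4); rw [e4]; exact hS' _ _⟩
    exact ⟨⟨⟨(_, _, _, _), p1, p2, p3, p4⟩, by rw [← hn]; exact (card_cls S).symm,
      (pmem1_iff hr s d1 d2 _).2 t1, (pmem2_iff hr s d1 d2 _).2 t2,
      (pmem3_iff hr s d1 d2 _).2 t3, (pmem4_iff hr s d1 d2 _).2 t4⟩,
      Subtype.ext (union4_eq e1 e2 e3 e4)⟩

lemma prodToSet_sum {n : ℕ} {r s d1 d2 : ℤ} (hr : 1 ≤ r) (y : ProductSide n r s d1 d2) :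
    (∑ x ∈ (prodToSet hr y).1, x.a = (∑ j, y.val.2.1.1 j) + (∑ j, y.val.2.2.1.1 j) +
        (∑ j, y.val.2.2.2.1.1 j) + (∑ j, y.val.2.2.2.2.1 j)) ∧
    (∑ x ∈ (prodToSet hr y).1, x.b = (∑ j, y.val.2.1.2 j) + (∑ j, y.val.2.2.1.2 j) +
        (∑ j, y.val.2.2.2.1.2 j) + (∑ j, y.val.2.2.2.2.2 j)) := by
  obtain ⟨⟨q, p1, p2, p3, p4⟩, hn, h1, h2, h3, h4⟩ := y
  have s1 := ((pmem1_iff hr s d1 d2 _).1 h1).1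
  have s2 := ((pmem2_iff hr s d1 d2 _).1 h2).1
  have s3 := ((pmem3_iff hr s d1 d2 _).1 h3).1
  have s4 := ((pmem4_iff hr s d1 d2 _).1 h4).1
  simp only [prodToSet]
  constructor <;>
  · rw [sum_cls, cls_union4_ff, cls_union4_tf, cls_union4_tt, cls_union4_ft]
    unfold lset
    rw [s1.sum_imgSet, s2.sum_imgSet, s3.sum_imgSet, s4.sum_imgSet]
    rfl

/-! ### Exchanging interactions between bottom and top points -/

/-- The interaction of a top point `i` with a later bottom point `j` on the same side; zero for all
other pairs. -/
def cross (r : ℤ) {n : ℕ} (f : Fin n → LPt) (i j : Fin n) : ℤ :=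
  if i < j ∧ (f i).side = (f j).side ∧ (f i).top = true ∧ (f j).top = false then
    max (r - ((f j).a - (f i).a)) 0 else 0

/-- The interactions of `j` as a top point minus those of `j` as a bottom point. -/
def shift (r : ℤ) {n : ℕ} (f : Fin n → LPt) (j : Fin n) : ℤ :=
  ∑ i, cross r f j i - ∑ i, cross r f i j

/-- The sequence `f` with heights changed by `ε` times the shift. Interactions do not involve heights,
so `ε = 1` and `ε = -1` are inverse to each other. -/
def moved (r ε : ℤ) {n : ℕ} (f : Fin n → LPt) (j : Fin n) : LPt :=
  { f j with b := (f j).b + ε * shift r f j }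

lemma shift_moved (r ε : ℤ) {n : ℕ} (f : Fin n → LPt) (j : Fin n) :
    shift r (moved r ε f) j = shift r f j := rfl

lemma moved_moved (r ε ε' : ℤ) (h : ε + ε' = 0) {n : ℕ} (f : Fin n → LPt) :
    moved r ε' (moved r ε f) = f := by
  funext j
  refine LPt.ext rfl rfl rfl ?_
  change (f j).b + ε * shift r f j + ε' * shift r f j = (f j).b
  linear_combination shift r f j * h

/-- Each interaction is added once and subtracted once. -/
lemma sum_shift (r : ℤ) {n : ℕ} (f : Fin n → LPt) : ∑ j, shift r f j = 0 := by
  simp only [shift, sum_sub_distrib]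
  rw [sum_comm, sub_self]

lemma SepSeq.between {r : ℤ} {n : ℕ} {f : Fin n → LPt} (h : SepSeq r f) {i j k : Fin n}
    (h1 : i ≤ k) (h2 : k ≤ j) (e1 : (f i).side = (f j).side) (e2 : (f i).a = (f j).a)
    (e3 : (f i).top = (f j).top) :
    (f k).side = (f j).side ∧ (f k).a = (f j).a ∧ (f k).top = (f j).top := by
  rcases h1.eq_or_lt with rfl | h1
  · exact ⟨e1, e2, e3⟩
  rcases h2.eq_or_lt with rfl | h2
  · exact ⟨rfl, rfl, rfl⟩
  have h3 := (h i k h1).1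
  have h4 := (h k j h2).1
  rw [LPt.lt_iff] at h3 h4
  grind

/-- Points with equal `side`, `a`, `top` have the same shift: no point with the opposite value of
`top` lies between them. -/
lemma SepSeq.shift_eq {r : ℤ} {n : ℕ} {f : Fin n → LPt} (h : SepSeq r f) {i j : Fin n}
    (hij : i < j) (e1 : (f i).side = (f j).side) (e2 : (f i).a = (f j).a)
    (e3 : (f i).top = (f j).top) : shift r f i = shift r f j := by
  unfold shift
  congr 1
  · refine sum_congr rfl fun k _ => ?_
    unfold cross
    have hb := fun h1 h2 => h.between (k := k) h1 h2 e1 e2 e3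
    rw [e1, e2, e3]
    refine if_congr ?_ rfl rfl
    constructor
    · rintro ⟨h1, h2, h3, h4⟩
      refine ⟨?_, h2, h3, h4⟩
      by_contra hc
      have := hb h1.le (not_lt.1 hc)
      rw [this.2.2, h3] at h4
      cases h4
    · rintro ⟨h1, h2⟩
      exact ⟨hij.trans h1, h2⟩
  · refine sum_congr rfl fun k _ => ?_
    unfold cross
    have hb := fun h1 h2 => h.between (k := k) h1 h2 e1 e2 e3
    rw [e1, e2, e3]
    refine if_congr ?_ rfl rfl
    constructor
    · rintro ⟨h1, h2⟩
      exact ⟨h1.trans hij, h2⟩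
    · rintro ⟨h1, h2, h3, h4⟩
      refine ⟨?_, h2, h3, h4⟩
      by_contra hc
      have := hb (not_lt.1 hc) h1.le
      rw [this.2.2, h4] at h3
      cases h3

lemma SepSeq.moved {r : ℤ} {n : ℕ} {f : Fin n → LPt} (h : SepSeq r f) (ε : ℤ) :
    SepSeq r (moved r ε f) := by
  intro i j hij
  have h1 := h i j hij
  have h2 := h.shift_eq hij
  simp only [Apart, LPt.lt_iff, _root_.moved] at h1 ⊢
  grind

/-- The sum over all earlier points on the side of `j`, whatever their label `top`. -/
def lowAll (r : ℤ) {n : ℕ} (f : Fin n → LPt) (j : Fin n) : ℤ :=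
  ∑ i ∈ univ.filter (fun i => i < j ∧ (f i).side = (f j).side), max (r - ((f j).a - (f i).a)) 0

/-- The sum over all later points on the side of `j`, whatever their label `top`. -/
def highAll (r : ℤ) {n : ℕ} (f : Fin n → LPt) (j : Fin n) : ℤ :=
  ∑ i ∈ univ.filter (fun i => j < i ∧ (f i).side = (f j).side), max (r - ((f i).a - (f j).a)) 0

/-- The wall and height conditions that the labels of `f j` ask for, bottom and top points on the
same side both counting in the height bounds. -/
def LabOK (r s d1 d2 : ℤ) {n : ℕ} (f : Fin n → LPt) (j : Fin n) : Prop :=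
  ((f j).side = false → 0 ≤ (f j).a) ∧ ((f j).side = true → (f j).a ≤ d1) ∧
  ((f j).top = false → lowAll r f j ≤ (f j).b) ∧
  ((f j).top = true → (f j).b ≤ d2 + s * (f j).a - highAll r f j)

/-- Separated sequences of `n` labelled points satisfying `LabOK`. -/
def LabSide (n : ℕ) (r s d1 d2 : ℤ) :=
  { f : Fin n → LPt // SepSeq r f ∧ ∀ j, LabOK r s d1 d2 f j }

/-- For a bottom point the shift is minus the contribution of top points to `lowAll`. -/
lemma lowAll_eq {r : ℤ} {n : ℕ} {f : Fin n → LPt} (h : SepSeq r f) (j : Fin n)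
    (hj : (f j).top = false) :
    lowAll r f j = lowSum r (imgSet (moved r 1 f)) (moved r 1 f j) - shift r f j := by
  rw [(h.moved 1).lowSum_eq]
  simp only [moved, lowAll, shift, cross, hj, sum_filter]
  simp only [Bool.false_eq_true, false_and, and_false, if_false, sum_const_zero, zero_sub,
    sub_neg_eq_add, ← sum_add_distrib]
  refine sum_congr rfl fun i _ => ?_
  cases (f i).top <;> simp

/-- For a top point the shift is the contribution of bottom points to `highAll`. -/
lemma highAll_eq {r : ℤ} {n : ℕ} {f : Fin n → LPt} (h : SepSeq r f) (j : Fin n)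
    (hj : (f j).top = true) :
    highAll r f j = highSum r (imgSet (moved r 1 f)) (moved r 1 f j) + shift r f j := by
  rw [(h.moved 1).highSum_eq]
  simp only [moved, highAll, shift, cross, hj, sum_filter]
  simp only [Bool.true_eq_false, and_false, if_false, sum_const_zero, sub_zero,
    ← sum_add_distrib]
  refine sum_congr rfl fun i _ => ?_
  cases (f i).top <;> simp [eq_comm]

lemma labOK_iff {r s d1 d2 : ℤ} {n : ℕ} {f : Fin n → LPt} (h : SepSeq r f) (j : Fin n) :
    LabOK r s d1 d2 f j ↔ PtOK r s d1 d2 (imgSet (moved r 1 f)) (moved r 1 f j) := by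
  unfold LabOK PtOK
  refine and_congr Iff.rfl (and_congr Iff.rfl (and_congr ?_ ?_))
  · refine imp_congr_right fun hj => ?_
    rw [lowAll_eq h j hj]
    change _ ↔ _ ≤ (f j).b + 1 * shift r f j
    constructor <;> intro <;> linarith
  · refine imp_congr_right fun hj => ?_
    rw [highAll_eq h j hj]
    change _ ↔ (f j).b + 1 * shift r f j ≤ d2 + s * (f j).a - _
    constructor <;> intro <;> linarith

lemma setOK_imgSet {r s d1 d2 : ℤ} {n : ℕ} {f : Fin n → LPt} (h : SepSeq r f) :
    SetOK r s d1 d2 (imgSet f) ↔ ∀ j, PtOK r s d1 d2 (imgSet f) (f j) := by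
  constructor
  · exact fun h3 j => h3.2 _ (mem_imgSet.2 ⟨j, rfl⟩)
  · refine fun h2 => ⟨h.sepSet, fun x hx => ?_⟩
    obtain ⟨j, rfl⟩ := mem_imgSet.1 hx
    exact h2 j

/-- Move the heights by the shift and forget the order. -/
def labToSet {n : ℕ} {r s d1 d2 : ℤ} (f : LabSide n r s d1 d2) : SetSide n r s d1 d2 :=
  ⟨imgSet (moved r 1 f.1), (f.2.1.moved 1).card_imgSet,
    (setOK_imgSet (f.2.1.moved 1)).2 fun j => (labOK_iff f.2.1 j).1 (f.2.2 j)⟩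

lemma labToSet_bijective {n : ℕ} {r s d1 d2 : ℤ} :
    Function.Bijective (labToSet (n := n) (r := r) (s := s) (d1 := d1) (d2 := d2)) := by
  constructor
  · rintro ⟨f, hf, hf'⟩ ⟨g, hg, hg'⟩ e
    have e' := (hf.moved 1).imgSet_inj (hg.moved 1) (congrArg Subtype.val e)
    refine Subtype.ext ?_
    change f = g
    rw [← moved_moved r 1 (-1) (by norm_num) f, e', moved_moved r 1 (-1) (by norm_num) g]
  · rintro ⟨S, hn, hS⟩
    obtain ⟨g, hg, rfl⟩ := hS.1.exists_seq hn
    have e : moved r 1 (moved r (-1) g) = g := moved_moved r (-1) 1 (by norm_num) g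
    refine ⟨⟨moved r (-1) g, hg.moved _, fun j => ?_⟩, Subtype.ext ?_⟩
    · rw [labOK_iff (hg.moved _), e]
      exact (setOK_imgSet hg).1 hS j
    · exact congrArg imgSet e

lemma labToSet_sum {n : ℕ} {r s d1 d2 : ℤ} (f : LabSide n r s d1 d2) :
    ∑ x ∈ (labToSet f).1, x.a = ∑ j, (f.1 j).a ∧
    ∑ x ∈ (labToSet f).1, x.b = ∑ j, (f.1 j).b := by
  constructor
  · exact (f.2.1.moved 1).sum_imgSet _
  · refine ((f.2.1.moved 1).sum_imgSet _).trans ?_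
    change ∑ j, ((f.1 j).b + 1 * shift r f.1 j) = _
    simp only [one_mul, sum_add_distrib, sum_shift, add_zero]

/-! ### Blocks and columns of a type vector -/

/-- Extension of a function on `Fin n` to `ℕ` by zero. -/
def ext0 {M : Type*} [Zero M] {n : ℕ} (g : Fin n → M) (k : ℕ) : M :=
  if h : k < n then g ⟨k, h⟩ else 0

lemma ext0_of_lt {M : Type*} [Zero M] {n : ℕ} (g : Fin n → M) {k : ℕ} (h : k < n) :
    ext0 g k = g ⟨k, h⟩ := by simp [ext0, h]

lemma ext0_val {M : Type*} [Zero M] {n : ℕ} (g : Fin n → M) (j : Fin n) :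
    ext0 g j = g j := by simp [ext0]

open Classical in
/-- Cut `ℕ` between `k` and `k + 1` whenever `P k`; this is the first index of the segment of `k`. -/
def segStart (P : ℕ → Prop) : ℕ → ℕ
  | 0 => 0
  | k + 1 => if P k then k + 1 else segStart P k

/-- `k` is the first index of a segment; see `segStart`. -/
def IsStart (P : ℕ → Prop) (k : ℕ) : Prop := 0 < k → P (k - 1)

section seg
variable {P : ℕ → Prop}

lemma segStart_succ_of {k : ℕ} (h : P k) : segStart P (k + 1) = k + 1 := by simp [segStart, h]

lemma segStart_succ_not {k : ℕ} (h : ¬ P k) : segStart P (k + 1) = segStart P k := by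
  simp [segStart, h]

lemma segStart_le (k : ℕ) : segStart P k ≤ k := by
  induction k with
  | zero => simp [segStart]
  | succ k ih =>
    by_cases h : P k
    · rw [segStart_succ_of h]
    · rw [segStart_succ_not h]; omega

lemma isStart_segStart (k : ℕ) : IsStart P (segStart P k) := by
  induction k with
  | zero => intro h; simp [segStart] at h
  | succ k ih =>
    by_cases h : P k
    · rw [segStart_succ_of h]; intro _; simpa using h
    · rw [segStart_succ_not h]; exact ih

lemma not_of_segStart_le {k i : ℕ} (h1 : segStart P k ≤ i) (h2 : i < k) : ¬ P i := by
  induction k with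
  | zero => omega
  | succ k ih =>
    by_cases h : P k
    · rw [segStart_succ_of h] at h1; omega
    · rw [segStart_succ_not h] at h1
      rcases Nat.lt_succ_iff_lt_or_eq.1 h2 with h3 | rfl
      · exact ih h1 h3
      · exact h

lemma segStart_eq {k j : ℕ} (hj : IsStart P j) (hjk : j ≤ k) (h : ∀ i, j ≤ i → i < k → ¬ P i) :
    segStart P k = j := by
  induction k with
  | zero => simp [segStart]; omega
  | succ k ih =>
    rcases hjk.eq_or_lt with rfl | hlt
    · exact segStart_succ_of (by simpa using hj (by omega))
    · rw [segStart_succ_not (h k (by omega) (by omega))]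
      exact ih (by omega) fun i h1 h2 => h i h1 (by omega)

lemma segStart_of_isStart {j : ℕ} (hj : IsStart P j) : segStart P j = j :=
  segStart_eq hj le_rfl (by omega)

lemma not_isStart_of {k q : ℕ} (h1 : segStart P k < q) (h2 : q ≤ k) : ¬ IsStart P q :=
  fun h => not_of_segStart_le (P := P) (k := k) (i := q - 1) (by omega) (by omega) (h (by omega))

end seg

section delta
variable {n r : ℕ} (δ : Fin (n - 1) → Fin (r + 1))

/-- `δ` as a function on `ℕ`, zero outside its range. Indices are 0-based: `dl δ k` belongs to the
step from `k` to `k + 1`. -/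
def dl (k : ℕ) : ℕ := ext0 (fun i => (δ i : ℕ)) k

/-- Partial sums of `δ` on `ℕ`. -/
def psN (k : ℕ) : ℤ := ∑ i ∈ range k, (dl δ i : ℤ)

/-- The 1-based number of the block of `k`. -/
def bnN (k : ℕ) : ℕ := 1 + ((range k).filter (fun i => dl δ i = r)).card

lemma dl_le (k : ℕ) : dl δ k ≤ r := by
  unfold dl ext0
  split_ifs
  · exact Nat.lt_succ_iff.1 (δ ⟨k, by assumption⟩).2
  · omega

lemma psN_succ (k : ℕ) : psN δ (k + 1) = psN δ k + dl δ k := by simp [psN, sum_range_succ]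

lemma bnN_zero : bnN δ 0 = 1 := by simp [bnN]

lemma bnN_succ_of {k : ℕ} (h : dl δ k = r) : bnN δ (k + 1) = bnN δ k + 1 := by
  simp [bnN, range_add_one, filter_insert, h]; omega

lemma bnN_succ_not {k : ℕ} (h : dl δ k ≠ r) : bnN δ (k + 1) = bnN δ k := by
  simp [bnN, range_add_one, filter_insert, h]

lemma bnN_mono : Monotone (bnN δ) := by
  refine monotone_nat_of_le_succ fun k => ?_
  by_cases h : dl δ k = r
  · rw [bnN_succ_of δ h]; omega
  · rw [bnN_succ_not δ h]

lemma pSum_eq (j : Fin n) : pSum n r δ j = psN δ j := by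
  unfold pSum psN
  refine sum_bij (fun i _ => (i : ℕ)) ?_ ?_ ?_ ?_
  · intro i hi; simpa using hi
  · intro i _ i' _ h; exact Fin.ext h
  · intro k hk
    have := j.2
    have hk' := mem_range.1 hk
    exact ⟨⟨k, by omega⟩, by simpa using hk', rfl⟩
  · intro i _; simp [dl, ext0]

lemma blockNum_eq (j : Fin n) : blockNum n r δ j = bnN δ j := by
  unfold blockNum bnN
  congr 1
  refine card_bij (fun i _ => (i : ℕ)) ?_ ?_ ?_
  · intro i hi; simpa [dl, ext0] using hi
  · intro i _ i' _ h; exact Fin.ext h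
  · intro k hk
    have := j.2
    simp only [mem_filter, mem_range] at hk
    have h : k < n - 1 := by omega
    exact ⟨⟨k, h⟩, by simpa [dl, ext0, h] using hk, rfl⟩

lemma ellStat_eq : ellStat n r δ = bnN δ (n - 1) := by
  unfold ellStat bnN
  congr 1
  refine card_bij (fun i _ => (i : ℕ)) ?_ ?_ ?_
  · intro i hi; simpa [dl, ext0] using hi
  · intro i _ i' _ h; exact Fin.ext h
  · intro k hk
    simp only [mem_filter, mem_range] at hk
    exact ⟨⟨k, hk.1⟩, by simpa [dl, ext0, hk.1] using hk, rfl⟩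

lemma delTotal_eq : delTotal n r δ = psN δ (n - 1) := by
  unfold delTotal psN
  rw [← Fin.sum_univ_eq_sum_range]
  refine sum_congr rfl fun i _ => ?_
  simp [dl, ext0]

/-- The first index of the block of `k`. -/
def blkS (k : ℕ) : ℕ := segStart (fun i => dl δ i = r) k

/-- The first index of the column of `k`. -/
def colS (k : ℕ) : ℕ := segStart (fun i => dl δ i ≠ 0) k

lemma blockStart_iff (j : Fin n) : blockStart n r δ j ↔ IsStart (fun i => dl δ i = r) j := by
  unfold blockStart IsStart
  refine forall_congr' fun hj => ?_
  have : (j : ℕ) - 1 < n - 1 := by have := j.2; omega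
  simp [dl, ext0, this]

lemma colStart_iff (j : Fin n) : colStart n r δ j ↔ IsStart (fun i => dl δ i ≠ 0) j := by
  unfold colStart IsStart
  refine forall_congr' fun hj => ?_
  have : (j : ℕ) - 1 < n - 1 := by have := j.2; omega
  simp [dl, ext0, this]

lemma isColumn_iff (j j' : Fin n) : IsColumn n r δ j j' ↔
    colS δ j' = j ∧ ((j' : ℕ) + 1 < n → dl δ j' ≠ 0) := by
  unfold IsColumn
  rw [colStart_iff]
  have hj' := j'.2
  constructor
  · rintro ⟨h1, h2, h3, h4⟩
    refine ⟨segStart_eq h2 h1 fun i hi hi' => ?_, fun h => ?_⟩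
    · have := h3 ⟨i, by omega⟩ hi hi' (by simp; omega)
      have h : i < n - 1 := by omega
      simpa [dl, ext0, h] using this
    · have h : (j' : ℕ) < n - 1 := by omega
      simpa [dl, ext0, h] using h4 h
  · rintro ⟨h1, h2⟩
    refine ⟨?_, ?_, ?_, ?_⟩
    · rw [Fin.le_def, ← h1]; exact segStart_le _
    · rw [← h1]; exact isStart_segStart _
    · intro k hk hk' h
      have := not_of_segStart_le (P := fun i => dl δ i ≠ 0) (k := j') (i := k)
        (by rw [Fin.le_def, ← h1] at hk; exact hk) hk'
      simpa [dl, ext0, h] using this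
    · intro h
      have := h2 (by omega)
      simpa [dl, ext0, h] using this

lemma blkS_succ_of {k : ℕ} (h : dl δ k = r) : blkS δ (k + 1) = k + 1 :=
  segStart_succ_of (P := fun i => dl δ i = r) h

lemma blkS_succ_not {k : ℕ} (h : dl δ k ≠ r) : blkS δ (k + 1) = blkS δ k :=
  segStart_succ_not (P := fun i => dl δ i = r) h

lemma colS_succ_of {k : ℕ} (h : dl δ k ≠ 0) : colS δ (k + 1) = k + 1 :=
  segStart_succ_of (P := fun i => dl δ i ≠ 0) h

lemma colS_succ_not {k : ℕ} (h : dl δ k = 0) : colS δ (k + 1) = colS δ k :=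
  segStart_succ_not (P := fun i => dl δ i ≠ 0) (by simpa using h)

lemma blkS_le (k : ℕ) : blkS δ k ≤ k := segStart_le k

lemma colS_le (k : ℕ) : colS δ k ≤ k := segStart_le k

lemma colS_colS (k : ℕ) : colS δ (colS δ k) = colS δ k :=
  segStart_of_isStart (isStart_segStart k)

lemma bnN_blkS (k : ℕ) : bnN δ (blkS δ k) = bnN δ k := by
  induction k with
  | zero => simp [blkS, segStart]
  | succ k ih =>
    by_cases h : dl δ k = r
    · rw [blkS_succ_of δ h]
    · rw [blkS_succ_not δ h, bnN_succ_not δ h]; exact ih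

lemma exists_colEnd (k : ℕ) (hk : k < n) :
    ∃ j', k ≤ j' ∧ j' < n ∧ colS δ j' = colS δ k ∧ (j' + 1 < n → dl δ j' ≠ 0) := by
  induction h : n - k generalizing k with
  | zero => omega
  | succ e ih =>
    by_cases h' : k + 1 < n ∧ dl δ k = 0
    · obtain ⟨j', h1, h2, h3, h4⟩ := ih (k + 1) h'.1 (by omega)
      exact ⟨j', by omega, h2, by rw [h3, colS_succ_not δ h'.2], h4⟩
    · exact ⟨k, le_rfl, hk, rfl, by tauto⟩

end delta

/-! ### The cones as chains of consecutive inequalities -/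

section chain
variable {n r : ℕ} (s d1 d2 : ℤ) (δ : Fin (n - 1) → Fin (r + 1)) (m : ℕ)
    (w : Fin n → ℕ) (a b : Fin n → ℤ)

/-- The conditions on `a` in `Ktype`, rewritten step by step. -/
def ChainA : Prop :=
  (∀ k, k + 1 < n → dl δ k < r → ext0 a (k + 1) = ext0 a k + dl δ k) ∧
  (∀ k, k + 1 < n → dl δ k = r → bnN δ k ≠ m → ext0 a k + r ≤ ext0 a (k + 1)) ∧
  (m ≠ 0 → 0 ≤ ext0 a 0) ∧ (m ≠ bnN δ (n - 1) → ext0 a (n - 1) ≤ d1)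

/-- The conditions on `b` in `Ktype`, rewritten step by step. -/
def ChainB : Prop :=
  (∀ k : Fin n, colS δ k = k → w k ≠ 0 → Lstat n r δ k ≤ b k) ∧
  (∀ k, k + 1 < n → dl δ k = 0 → k - colS δ k + 1 ≠ ext0 w (colS δ k) →
    ext0 b k + r ≤ ext0 b (k + 1)) ∧
  (∀ k : Fin n, ((k : ℕ) + 1 < n → dl δ k ≠ 0) → (k : ℕ) - colS δ k + 1 ≠ ext0 w (colS δ k) →
    b k ≤ d2 + s * ext0 a (colS δ k) - Rstat n r δ k)

variable {δ m a d1} in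
lemma ChainA.eq_blkS (h : ChainA d1 δ m a) (k : ℕ) (hk : k < n) :
    ext0 a k = ext0 a (blkS δ k) + (psN δ k - psN δ (blkS δ k)) := by
  induction k with
  | zero => simp [blkS, segStart]
  | succ k ih =>
    by_cases hd : dl δ k = r
    · rw [blkS_succ_of δ hd]; ring
    · have h1 := h.1 k hk (lt_of_le_of_ne (dl_le δ k) hd)
      rw [blkS_succ_not δ hd, psN_succ, h1, ih (by omega)]; ring

lemma blkS_eq_of {p k : ℕ} (hp : IsStart (fun i => dl δ i = r) p) (hpk : p ≤ k)
    (h : ∀ q, p < q → q ≤ k → ¬ IsStart (fun i => dl δ i = r) q) : blkS δ k = p := by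
  refine segStart_eq hp hpk fun i h1 h2 h3 => h (i + 1) (by omega) (by omega) ?_
  intro _
  simpa using h3

lemma ktype_iff (hn : 1 ≤ n) : Ktype n r s d1 d2 δ m w a b ↔
    ChainA d1 δ m a ∧ ChainB s d2 δ w a b := by
  unfold Ktype
  simp only [blockStart_iff, isColumn_iff, pSum_eq, blockNum_eq, ellStat_eq, delTotal_eq]
  constructor
  · rintro ⟨h1, h2, h3, h4, h5⟩
    have key : ∀ k, k < n →
        ext0 a k = ext0 a (blkS δ k) + (psN δ k - psN δ (blkS δ k)) := by
      intro k hk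
      have hle := blkS_le δ k
      rcases hle.eq_or_lt with e | hlt
      · rw [e]; ring
      · have := h1 ⟨k, hk⟩ (not_isStart_of hlt le_rfl) ⟨blkS δ k, by omega⟩ (isStart_segStart k)
          hlt (fun q hq hqk => ?_)
        · rwa [ext0_of_lt a hk, ext0_of_lt a (by omega : blkS δ k < n)]
        · by_contra hc
          exact not_isStart_of (not_le.1 hc) (Fin.le_def.1 hqk.le) hq
    refine ⟨⟨fun k hk hd => ?_, fun k hk hd hm => ?_, fun hm => ?_, fun hm => ?_⟩, ?_, ?_, ?_⟩
    · rw [key (k + 1) hk, key k (by omega), blkS_succ_not δ hd.ne, psN_succ]; ring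
    · have hle := blkS_le δ k
      have := h3 ⟨blkS δ k, by omega⟩ ⟨k + 1, hk⟩ (isStart_segStart k) (fun _ => hd)
        (by simp [Fin.lt_def]; omega) (fun q hq hq' => not_isStart_of (k := k) hq (by
          rw [Fin.lt_def] at hq'; simp at hq'; omega)) (by simpa only [bnN_blkS] using hm)
      rw [← ext0_of_lt a, ← ext0_of_lt a] at this
      rw [key k (by omega)]
      simp only [psN_succ, hd] at this
      linarith
    · have := h2 hm hn
      rwa [← ext0_of_lt a] at this
    · have hle := blkS_le δ (n - 1)
      have := h4 ⟨blkS δ (n - 1), by omega⟩ (isStart_segStart (n - 1))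
        (fun q hq => not_isStart_of (k := n - 1) hq (by omega)) hm
      rw [← ext0_of_lt a] at this
      rw [key (n - 1) (by omega)]
      exact this
    · intro k hk hw
      obtain ⟨j', i1, i2, i3, i4⟩ := exists_colEnd δ k k.2
      exact (h5 k ⟨j', i2⟩ ⟨by rw [i3, hk], i4⟩).1 hw
    · intro k hk hd hw
      have hle := colS_le δ k
      obtain ⟨j', i1, i2, i3, i4⟩ := exists_colEnd δ k (by omega)
      have hne : j' ≠ k := by rintro rfl; exact i4 hk hd
      have := (h5 ⟨colS δ k, by omega⟩ ⟨j', i2⟩ ⟨i3, i4⟩).2.1 ⟨k, by omega⟩ hle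
        (by simp [Fin.lt_def]; omega) hk (by rwa [ext0_of_lt w (by omega)] at hw)
      rwa [ext0_of_lt b, ext0_of_lt b]
    · intro k hd hw
      have hle := colS_le δ k
      have hk := k.2
      have := (h5 ⟨colS δ k, by omega⟩ k ⟨rfl, hd⟩).2.2
        (by rwa [ext0_of_lt w (by omega)] at hw)
      rwa [ext0_of_lt a (by omega)]
  · rintro ⟨hA, hB1, hB2, hB3⟩
    have key := hA.eq_blkS
    refine ⟨?_, ?_, ?_, ?_, ?_⟩
    · intro j hj i hi hij hmax
      have e : blkS δ j = i := by
        refine blkS_eq_of δ hi hij.le fun q hq hq' hqs => ?_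
        rcases hq'.eq_or_lt with rfl | hlt
        · exact hj hqs
        · exact absurd (Fin.le_def.1 (hmax ⟨q, hlt.trans j.2⟩ hqs hlt)) (by simpa using hq)
      have := key j j.2
      rwa [e, ext0_val, ext0_val] at this
    · intro hm h
      rw [← ext0_of_lt a]
      exact hA.2.2.1 hm
    · intro p p' hp hp' hpp hno hm
      have hpp' := Fin.lt_def.1 hpp
      have hp2 := p'.2
      obtain ⟨k, hk⟩ : ∃ k, (p' : ℕ) = k + 1 := ⟨p' - 1, by omega⟩
      have hd : dl δ k = r := by
        have := hp' (by omega)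
        simpa [hk] using this
      have e : blkS δ k = p := by
        refine blkS_eq_of δ hp (by omega) fun q hq hq' => ?_
        exact hno ⟨q, by omega⟩ hq (by rw [Fin.lt_def]; simp; omega)
      have h1 := key k (by omega)
      have h2 := hA.2.1 k (by omega) hd (by rwa [← bnN_blkS, e])
      rw [e] at h1
      rw [← ext0_val a p, ← ext0_val a p', hk, psN_succ, hd]
      linarith
    · intro p hp hno hm
      have hp2 := p.2
      have e : blkS δ (n - 1) = p := by
        refine blkS_eq_of δ hp (by omega) fun q hq hq' => ?_
        exact hno ⟨q, by omega⟩ hq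
      have h1 := key (n - 1) (by omega)
      have h2 := hA.2.2.2 hm
      rw [e] at h1
      rw [← ext0_val a p]
      linarith
    · rintro j j' ⟨hj, hd⟩
      have hc : ∀ k : ℕ, (j : ℕ) ≤ k → k ≤ j' → colS δ k = j := by
        intro k h1 h2
        refine segStart_eq (by rw [← hj]; exact isStart_segStart _) h1 fun i h3 h4 =>
          not_of_segStart_le (P := fun i => dl δ i ≠ 0) (k := j') (i := i)
            (by rw [← hj] at h3; exact h3) (by omega)
      have hjj : (j : ℕ) ≤ j' := by rw [← hj]; exact colS_le _ _
      refine ⟨fun hw => hB1 j (hc j le_rfl hjj) hw, fun k h1 h2 h hw => ?_, fun hw => ?_⟩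
      · have hk := hc k h1 (Fin.lt_def.1 h2).le
        have := hB2 k h ?_ ?_
        · rwa [ext0_val, ext0_of_lt b h] at this
        · by_contra hne
          exact not_of_segStart_le (P := fun i => dl δ i ≠ 0) (k := j') (i := k)
            (by rw [Fin.le_def, ← hj] at h1; exact h1) h2 hne
        · rwa [hk, ext0_val]
      · have := hB3 j' hd
        rw [hj, ext0_val, ext0_val] at this
        exact this hw

lemma validW_iff : ValidW n r δ w ↔
    (∀ k : Fin n, ((k : ℕ) + 1 < n → dl δ k ≠ 0) →
      ext0 w (colS δ k) ≤ (k : ℕ) - colS δ k + 1) ∧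
    (∀ j : Fin n, colS δ j ≠ j → w j = 0) := by
  unfold ValidW
  simp only [isColumn_iff, colStart_iff]
  refine and_congr ?_ (forall_congr' fun j => imp_congr_left (not_congr ?_))
  · constructor
    · intro h k hk
      have hle := colS_le δ k
      have := h ⟨colS δ k, by omega⟩ k ⟨rfl, hk⟩
      rwa [ext0_of_lt w (by omega)]
    · rintro h j j' ⟨hj, hd⟩
      have := h j' hd
      rwa [hj, ext0_val] at this
  · exact ⟨segStart_of_isStart, fun h => h ▸ isStart_segStart _⟩

end chain

/-! ### Cone points as labelled sequences -/

section bridge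
variable {n r : ℕ} (δ : Fin (n - 1) → Fin (r + 1)) (m : ℕ)
    (w : Fin n → ℕ) (a b : Fin n → ℤ)

/-- The labelled sequence of a cone point. Blocks `1, …, m`, before the omitted inequality, are held
by the left wall and the others by the right wall; in each column the first `w` points are held
from below and the others from above. -/
def vf (j : Fin n) : LPt :=
  ⟨decide (m < bnN δ j), a j, decide (ext0 w (colS δ j) ≤ (j : ℕ) - colS δ j), b j⟩

/-- `δ` is the sequence of steps of `a` truncated at `r`, and the step across the two sides is `r`. -/
def Det : Prop := ∀ k, k + 1 < n → (dl δ k : ℤ) =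
  if (m < bnN δ k ↔ m < bnN δ (k + 1)) then min (ext0 a (k + 1) - ext0 a k) r else r

/-- `Det` combines the equations within blocks and the inequalities between blocks on one side. -/
lemma det_iff : Det δ m a ↔
    (∀ k, k + 1 < n → dl δ k < r → ext0 a (k + 1) = ext0 a k + dl δ k) ∧
    (∀ k, k + 1 < n → dl δ k = r → bnN δ k ≠ m → ext0 a k + r ≤ ext0 a (k + 1)) := by
  rw [← forall_and]
  refine forall_congr' fun k => ?_
  have h1 := dl_le δ k
  by_cases hd : dl δ k = r
  · rw [bnN_succ_of δ hd]
    constructor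
    · intro h
      refine ⟨by omega, fun hk _ hm => ?_⟩
      have := h hk
      rw [if_pos (by omega)] at this
      omega
    · rintro ⟨h2, h3⟩ hk
      split_ifs with hc
      · have := h3 hk hd (by omega)
        omega
      · omega
  · rw [bnN_succ_not δ hd]
    simp only [iff_self, if_true]
    constructor
    · intro h
      exact ⟨fun hk _ => by have := h hk; omega, by omega⟩
    · rintro ⟨h2, h3⟩ hk
      have := h2 hk (by omega)
      omega

variable {δ m w a b}

/-- Partial sums of `δ` agree with differences of `a` as long as these stay below `r`, which is all
that matters for `max (r - _) 0`; indices on different sides do not interact. -/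
lemma Det.diff (h : Det δ m a) (i e : ℕ) (hk : i + e < n) :
    ((m < bnN δ i ↔ m < bnN δ (i + e)) → ext0 a i ≤ ext0 a (i + e) ∧
      (psN δ (i + e) - psN δ i = ext0 a (i + e) - ext0 a i ∨
        ((r : ℤ) ≤ psN δ (i + e) - psN δ i ∧ (r : ℤ) ≤ ext0 a (i + e) - ext0 a i))) ∧
    (¬ (m < bnN δ i ↔ m < bnN δ (i + e)) → (r : ℤ) ≤ psN δ (i + e) - psN δ i) ∧
    psN δ i ≤ psN δ (i + e) := by
  induction e with
  | zero => simp
  | succ e ih =>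
    have ih := ih (by omega)
    have h1 := h (i + e) (by omega)
    have h2 := psN_succ δ (i + e)
    have h3 := bnN_mono δ (show i ≤ i + e by omega)
    have h4 := bnN_mono δ (show i + e ≤ i + (e + 1) by omega)
    rw [← add_assoc] at h4 ⊢
    split_ifs at h1 with hc
    · refine ⟨fun hs => ?_, fun hs => ?_, by omega⟩
      · have := ih.1 (by omega)
        omega
      · have := ih.2.1 (by omega)
        omega
    · refine ⟨fun hs => ?_, fun hs => ?_, by omega⟩
      · omega
      · omega

/-- `Det.diff` for the labels of `vf`. -/
lemma Det.diff' (h : Det δ m a) {i j : Fin n} (hij : i ≤ j) :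
    ((vf δ m w a b i).side = (vf δ m w a b j).side → a i ≤ a j ∧
      (psN δ j - psN δ i = a j - a i ∨
        ((r : ℤ) ≤ psN δ j - psN δ i ∧ (r : ℤ) ≤ a j - a i))) ∧
    (¬ (vf δ m w a b i).side = (vf δ m w a b j).side → (r : ℤ) ≤ psN δ j - psN δ i) := by
  have hij' := Fin.le_def.1 hij
  have := h.diff i (j - i) (by omega)
  rw [Nat.add_sub_cancel' hij', ext0_val, ext0_val] at this
  simp only [vf, decide_eq_decide]
  exact ⟨this.1, this.2.1⟩

/-- `L_C`, read off from `δ`, is the lower bound read off from the labelled points. -/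
lemma Det.lowAll_eq (h : Det δ m a) (j : Fin n) :
    lowAll r (vf δ m w a b) j = Lstat n r δ j := by
  unfold lowAll Lstat
  rw [sum_filter, sum_filter]
  refine sum_congr rfl fun i _ => ?_
  simp only [pSum_eq]
  by_cases hij : i < j
  · have := h.diff' (w := w) (b := b) hij.le
    by_cases hs : (vf δ m w a b i).side = (vf δ m w a b j).side
    · rw [if_pos ⟨hij, hs⟩, if_pos hij]
      have := (this.1 hs).2
      change max ((r : ℤ) - (a j - a i)) 0 = _
      omega
    · rw [if_neg (fun hc => hs hc.2), if_pos hij]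
      have := this.2 hs
      omega
  · rw [if_neg (fun hc => hij hc.1), if_neg hij]

/-- `R_C`, read off from `δ`, is the correction of the upper bound read off from the labelled
points. -/
lemma Det.highAll_eq (h : Det δ m a) (j : Fin n) :
    highAll r (vf δ m w a b) j = Rstat n r δ j := by
  unfold highAll Rstat
  rw [sum_filter, sum_filter]
  refine sum_congr rfl fun i _ => ?_
  simp only [pSum_eq]
  by_cases hij : j < i
  · have := h.diff' (w := w) (b := b) hij.le
    by_cases hs : (vf δ m w a b j).side = (vf δ m w a b i).side
    · rw [if_pos ⟨hij, hs.symm⟩, if_pos hij]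
      have := (this.1 hs).2
      change max ((r : ℤ) - (a i - a j)) 0 = _
      omega
    · rw [if_neg (fun hc => hs hc.2.symm), if_pos hij]
      have := this.2 hs
      omega
  · rw [if_neg (fun hc => hij hc.1), if_neg hij]

lemma Lstat_succ_s11 (k : ℕ) (hk : k + 1 < n) (hd : dl δ k = 0) :
    Lstat n r δ ⟨k + 1, hk⟩ = Lstat n r δ ⟨k, by omega⟩ + r := by
  unfold Lstat
  have : univ.filter (fun i : Fin n => i < ⟨k + 1, hk⟩) =
      insert ⟨k, by omega⟩ (univ.filter (fun i : Fin n => i < ⟨k, by omega⟩)) := by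
    ext i; simp [Fin.lt_def, Fin.ext_iff]; omega
  rw [this, sum_insert (by simp)]
  simp only [pSum_eq, psN_succ, hd]
  simp [add_comm]

lemma Rstat_succ (k : ℕ) (hk : k + 1 < n) (hd : dl δ k = 0) :
    Rstat n r δ ⟨k, by omega⟩ = Rstat n r δ ⟨k + 1, hk⟩ + r := by
  unfold Rstat
  have : univ.filter (fun i : Fin n => (⟨k, by omega⟩ : Fin n) < i) =
      insert ⟨k + 1, hk⟩ (univ.filter (fun i : Fin n => ⟨k + 1, hk⟩ < i)) := by
    ext i; simp [Fin.lt_def, Fin.ext_iff]; omega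
  rw [this, sum_insert (by simp)]
  simp only [pSum_eq, psN_succ, hd]
  simp [add_comm]

lemma Det.step_zero (hr : 1 ≤ r) (h : Det δ m a) {k : ℕ} (hk : k + 1 < n) (hd : dl δ k = 0) :
    bnN δ (k + 1) = bnN δ k ∧ ext0 a (k + 1) = ext0 a k := by
  have h1 := bnN_succ_not δ (k := k) (by omega)
  have h2 := h k hk
  rw [h1, if_pos Iff.rfl] at h2
  exact ⟨h1, by omega⟩

/-- Consecutive points of `vf` are apart precisely when the column inequality between them, if there
is one and it is not omitted, holds. -/
lemma Det.apart_iff (hr : 1 ≤ r) (h : Det δ m a) (k : ℕ) (hk : k + 1 < n) :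
    Apart r (vf δ m w a b ⟨k, by omega⟩) (vf δ m w a b ⟨k + 1, hk⟩) ↔
    (dl δ k = 0 → k - colS δ k + 1 ≠ ext0 w (colS δ k) → ext0 b k + r ≤ ext0 b (k + 1)) := by
  have hc := colS_le δ k
  have hmono := bnN_mono δ (show k ≤ k + 1 by omega)
  have hdet := h k hk
  unfold Apart
  rw [LPt.lt_iff, ext0_of_lt b hk, ext0_of_lt b (by omega : k < n)]
  rw [ext0_of_lt a hk, ext0_of_lt a (by omega : k < n)] at hdet
  simp only [vf, decide_eq_decide, Bool.lt_iff, decide_eq_false_iff_not, decide_eq_true_eq]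
  by_cases hd : dl δ k = 0
  · have h1 := h.step_zero hr hk hd
    rw [ext0_of_lt a hk, ext0_of_lt a (by omega : k < n)] at h1
    rw [h1.1, h1.2, colS_succ_not δ hd]
    simp only [hd, forall_const, true_and, iff_self, lt_self_iff_false, false_or]
    constructor
    · rintro ⟨_, h2⟩ hw
      exact h2 (by omega)
    · intro h2
      have : k - colS δ k + 1 ≠ ext0 w (colS δ k) ∨ k - colS δ k + 1 = ext0 w (colS δ k) := by
        tauto
      rcases this with hw | hw
      · have := h2 hw
        omega
      · omega
  · simp only [hd, false_imp_iff, iff_true]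
    split_ifs at hdet with hs
    · have : a ⟨k, by omega⟩ < a ⟨k + 1, hk⟩ := by omega
      exact ⟨Or.inr ⟨hs, Or.inl this⟩, by omega⟩
    · exact ⟨Or.inl (by omega), fun h' => absurd h' hs⟩

lemma Det.a_colS (hr : 1 ≤ r) (h : Det δ m a) (k : ℕ) (hk : k < n) :
    ext0 a (colS δ k) = ext0 a k := by
  induction k with
  | zero => simp [colS, segStart]
  | succ k ih =>
    by_cases hd : dl δ k = 0
    · rw [colS_succ_not δ hd, (h.step_zero hr hk hd).2, ih (by omega)]
    · rw [colS_succ_of δ hd]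

/-- A cone point is the same as a labelled sequence from `LabSide` with compatible `δ`. Inside a
column the height bounds change by `r` from one point to the next, so the bound at an end of the
column propagates along the column inequalities up to the omitted one. -/
lemma bridge (hn : 1 ≤ n) (hr : 1 ≤ r) (s d1 d2 : ℤ) (hm : m ≤ ellStat n r δ)
    (hw : ValidW n r δ w) :
    Ktype n r s d1 d2 δ m w a b ↔
      Det δ m a ∧ SepSeq r (vf δ m w a b) ∧ ∀ j, LabOK r s d1 d2 (vf δ m w a b) j := by
  rw [ktype_iff s d1 d2 δ m w a b hn]
  rw [ellStat_eq] at hm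
  rw [validW_iff] at hw
  unfold ChainA
  rw [← and_assoc (c := _ ∧ _), ← det_iff, and_assoc]
  refine and_congr_right fun h => ?_
  have hsep : SepSeq r (vf δ m w a b) ↔ ∀ k, k + 1 < n → dl δ k = 0 →
      k - colS δ k + 1 ≠ ext0 w (colS δ k) → ext0 b k + r ≤ ext0 b (k + 1) := by
    constructor
    · intro hs k hk
      exact (h.apart_iff hr k hk).1 (hs _ _ (by simp [Fin.lt_def]))
    · intro hs
      exact sepSeq_of_succ (by omega) fun k hk => (h.apart_iff hr k hk).2 (hs k hk)
  rw [hsep]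
  unfold LabOK ChainB
  simp only [h.lowAll_eq, h.highAll_eq]
  constructor
  · rintro ⟨⟨hl, hr'⟩, hb, hc, ht⟩
    refine ⟨hc, fun j => ⟨fun hs => ?_, fun hs => ?_, ?_, ?_⟩⟩
    · simp only [vf, decide_eq_false_iff_not] at hs
      have h0 : bnN δ 0 ≤ bnN δ j := bnN_mono δ (Nat.zero_le _)
      rw [bnN_zero] at h0
      have h1 := h.diff 0 j (by simp)
      rw [zero_add, bnN_zero, ext0_val] at h1
      exact (hl (by omega)).trans (h1.1 (by omega)).1
    · simp only [vf, decide_eq_true_eq] at hs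
      have hj := j.2
      have h0 : bnN δ j ≤ bnN δ (n - 1) := bnN_mono δ (by omega)
      have h1 := h.diff j (n - 1 - j) (by omega)
      rw [show (j : ℕ) + (n - 1 - j) = n - 1 by omega, ext0_val] at h1
      exact (h1.1 (by omega)).1.trans (hr' (by omega))
    · obtain ⟨k, hk⟩ := j
      simp only [vf, decide_eq_false_iff_not]
      induction k with
      | zero =>
        intro hs
        refine hb ⟨0, hk⟩ rfl ?_
        rw [← ext0_of_lt w hk]
        simp only [colS, segStart] at hs
        omega
      | succ k ih =>
        intro hs
        have hle := colS_le δ k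
        by_cases hd : dl δ k = 0
        · rw [colS_succ_not δ hd] at hs
          have h1 := ih (by omega) (by omega)
          have h2 := hc k hk hd (by omega)
          rw [ext0_of_lt b hk, ext0_of_lt b (by omega : k < n)] at h2
          rw [Lstat_succ_s11 k hk hd]
          linarith
        · rw [colS_succ_of δ hd] at hs
          refine hb ⟨k + 1, hk⟩ (colS_succ_of δ hd) ?_
          rw [← ext0_of_lt w hk]
          omega
    · obtain ⟨k, hk⟩ := j
      simp only [vf, decide_eq_true_eq]
      induction e : n - k generalizing k with
      | zero => omega
      | succ e ih =>
        intro hs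
        have hle := colS_le δ k
        by_cases hd : k + 1 < n ∧ dl δ k = 0
        · obtain ⟨hk1, hd⟩ := hd
          have h1 := ih (k + 1) hk1 (by omega) (by rw [colS_succ_not δ hd]; omega)
          have h2 := hc k hk1 hd (by omega)
          have h3 := (h.step_zero hr hk1 hd).2
          rw [ext0_of_lt b hk1, ext0_of_lt b (by omega : k < n)] at h2
          rw [ext0_of_lt a hk1, ext0_of_lt a (by omega : k < n)] at h3
          rw [Rstat_succ k hk1 hd, ← h3]
          linarith
        · have := ht ⟨k, hk⟩ (by simpa using hd) (by simp only; omega)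
          simp only at this
          rwa [h.a_colS hr k hk, ext0_of_lt a hk] at this
  · rintro ⟨hc, hL⟩
    refine ⟨⟨fun hm0 => ?_, fun hm1 => ?_⟩, fun k hk hw0 => ?_, hc, fun k hk hw0 => ?_⟩
    · have := (hL ⟨0, hn⟩).1 (by simp only [vf, bnN_zero, decide_eq_false_iff_not]; omega)
      rwa [ext0_of_lt a hn]
    · have := (hL ⟨n - 1, by omega⟩).2.1 (by simp only [vf, decide_eq_true_eq]; omega)
      rwa [ext0_of_lt a (by omega)]
    · refine (hL k).2.2.1 ?_
      simp only [vf, decide_eq_false_iff_not, hk, ext0_val]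
      omega
    · have h1 := hw.1 k hk
      have := (hL k).2.2.2 (by simp only [vf, decide_eq_true_eq]; omega)
      rwa [h.a_colS hr k k.2, ext0_val]

end bridge

/-! ### Recovering the cone from the labels -/

section bij
variable {n r : ℕ}

lemma exists_bnN_eq (δ : Fin (n - 1) → Fin (r + 1)) (k v : ℕ) (h1 : 1 ≤ v) (h2 : v ≤ bnN δ k) :
    ∃ j, j ≤ k ∧ bnN δ j = v := by
  induction k with
  | zero => rw [bnN_zero] at h2; exact ⟨0, le_rfl, by rw [bnN_zero]; omega⟩
  | succ k ih =>
    by_cases hv : v ≤ bnN δ k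
    · obtain ⟨j, hj, e⟩ := ih hv
      exact ⟨j, by omega, e⟩
    · refine ⟨k + 1, le_rfl, ?_⟩
      by_cases hd : dl δ k = r
      · rw [bnN_succ_of δ hd] at h2 ⊢; omega
      · rw [bnN_succ_not δ hd] at h2; omega

lemma colS_mid (δ : Fin (n - 1) → Fin (r + 1)) {k j : ℕ} (h1 : colS δ j ≤ k) (h2 : k ≤ j) :
    colS δ k = colS δ j :=
  segStart_eq (isStart_segStart j) h1 fun i hi hi' =>
    not_of_segStart_le (P := fun i => dl δ i ≠ 0) (k := j) (i := i) hi (by omega)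

lemma bnN_colS (hr : 1 ≤ r) (δ : Fin (n - 1) → Fin (r + 1)) (k : ℕ) :
    bnN δ (colS δ k) = bnN δ k := by
  induction k with
  | zero => simp [colS, segStart]
  | succ k ih =>
    by_cases hd : dl δ k = 0
    · rw [colS_succ_not δ hd, ih, bnN_succ_not δ (by omega)]
    · rw [colS_succ_of δ hd]

/-- Every number `1, …, ℓ(δ)` is the number of some block, so the labels `side` determine `m`. -/
lemma m_le_of_side {δ : Fin (n - 1) → Fin (r + 1)} {m m' : ℕ} (hm' : m' ≤ bnN δ (n - 1))
    (hn : 1 ≤ n) (h : ∀ j : Fin n, m < bnN δ j ↔ m' < bnN δ j) : m' ≤ m := by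
  by_contra hc
  obtain ⟨j, hj, e⟩ := exists_bnN_eq δ (n - 1) (m + 1) (by omega) (by omega)
  have := h ⟨j, by omega⟩
  simp only at this
  omega

/-- The labels `top` determine `w`. -/
lemma w_le_of_top {δ : Fin (n - 1) → Fin (r + 1)} {w w' : Fin n → ℕ} (hw' : ValidW n r δ w')
    (h : ∀ j : Fin n, ext0 w (colS δ j) ≤ (j : ℕ) - colS δ j ↔
      ext0 w' (colS δ j) ≤ (j : ℕ) - colS δ j) (j : Fin n) : w' j ≤ w j := by
  rw [validW_iff] at hw'
  by_cases hj : colS δ j = j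
  · by_contra hc
    obtain ⟨j', h1, h2, h3, h4⟩ := exists_colEnd δ j j.2
    have h5 := hw'.1 ⟨j', h2⟩ h4
    simp only [h3, hj, ext0_val] at h5
    have h6 : colS δ (j + w j) = j := by
      rw [colS_mid δ (j := j') (by omega) (by omega), h3, hj]
    have := h ⟨j + w j, by omega⟩
    simp only [h6, ext0_val] at this
    omega
  · rw [hw'.2 j hj]; omega

/-- The labelled sequence determines the cone and the point. -/
lemma vf_injective (hn : 1 ≤ n) {δ δ' : Fin (n - 1) → Fin (r + 1)} {m m' : ℕ}
    {w w' : Fin n → ℕ} {a a' b b' : Fin n → ℤ}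
    (hm : m ≤ ellStat n r δ) (hm' : m' ≤ ellStat n r δ')
    (hw : ValidW n r δ w) (hw' : ValidW n r δ' w') (hd : Det δ m a) (hd' : Det δ' m' a')
    (h : vf δ m w a b = vf δ' m' w' a' b') :
    δ = δ' ∧ m = m' ∧ w = w' ∧ a = a' ∧ b = b' := by
  have ha : a = a' := funext fun j => congrArg LPt.a (congrFun h j)
  have hb : b = b' := funext fun j => congrArg LPt.b (congrFun h j)
  have hs : ∀ j : Fin n, m < bnN δ j ↔ m' < bnN δ' j := fun j => by
    simpa only [vf, decide_eq_decide] using congrArg LPt.side (congrFun h j)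
  have ht : ∀ j : Fin n, ext0 w (colS δ j) ≤ (j : ℕ) - colS δ j ↔
      ext0 w' (colS δ' j) ≤ (j : ℕ) - colS δ' j := fun j => by
    simpa only [vf, decide_eq_decide] using congrArg LPt.top (congrFun h j)
  subst ha
  have e : δ = δ' := by
    funext i
    have hi := i.2
    have h1 := hd i (by omega)
    have h2 := hd' i (by omega)
    have h3 := hs ⟨i, by omega⟩
    have h4 := hs ⟨i + 1, by omega⟩
    simp only at h3 h4
    simp only [h3, h4, ← h2] at h1
    simp only [dl, ext0_val] at h1
    exact Fin.ext (by exact_mod_cast h1)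
  subst e
  rw [ellStat_eq] at hm hm'
  exact ⟨rfl, le_antisymm (m_le_of_side hm hn fun j => (hs j).symm) (m_le_of_side hm' hn hs),
    funext fun j => le_antisymm (w_le_of_top hw (fun j => (ht j).symm) j) (w_le_of_top hw' ht j),
    rfl, hb⟩

/-- The map of `vf`, with values in `LabSide`. -/
def vertexToLab (hn : 1 ≤ n) (hr : 1 ≤ r) (s d1 d2 : ℤ) (x : VertexConeSide n r s d1 d2) :
    LabSide n r s d1 d2 :=
  ⟨vf x.1.1.1 x.1.1.2.1 x.1.1.2.2 x.1.2.1 x.1.2.2,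
    ((bridge hn hr s d1 d2 x.2.1 x.2.2.1).1 x.2.2.2).2⟩

/-- Every separated sequence comes from a type vector: `Det` defines `δ`, `m` is the largest block
number on the left side, and `w` counts the bottom points of each column. -/
lemma vf_surjective (hr : 1 ≤ r) {f : Fin n → LPt} (hf : SepSeq r f) :
    ∃ (δ : Fin (n - 1) → Fin (r + 1)) (m : ℕ) (w : Fin n → ℕ),
      m ≤ ellStat n r δ ∧ ValidW n r δ w ∧ Det δ m (fun j => (f j).a) ∧
      vf δ m w (fun j => (f j).a) (fun j => (f j).b) = f := by
  have hside : ∀ i j : Fin n, i ≤ j → (f i).side = true → (f j).side = true := by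
    intro i j hij hi
    rcases hij.eq_or_lt with rfl | hlt
    · exact hi
    · have := (hf i j hlt).1
      rw [LPt.lt_iff, hi] at this
      rcases this with h | h
      · simp [Bool.lt_iff] at h
      · exact h.1.symm
  have hstep : ∀ i j : Fin n, i ≤ j → (f i).side = (f j).side → (f i).a ≤ (f j).a := by
    intro i j hij hi
    rcases hij.eq_or_lt with rfl | hlt
    · exact le_rfl
    · have := (hf i j hlt).1
      rw [LPt.lt_iff] at this
      grind
  let D : ∀ k, k + 1 < n → ℤ := fun k hk =>
    if (f ⟨k, by omega⟩).side = (f ⟨k + 1, hk⟩).side then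
      min ((f ⟨k + 1, hk⟩).a - (f ⟨k, by omega⟩).a) r else r
  have hD : ∀ k hk, 0 ≤ D k hk ∧ D k hk ≤ r := by
    intro k hk
    have := hstep ⟨k, by omega⟩ ⟨k + 1, hk⟩ (by simp [Fin.le_def])
    simp only [D]
    split_ifs with h
    · have := this h
      omega
    · omega
  let δ : Fin (n - 1) → Fin (r + 1) := fun i =>
    ⟨(D i (by omega)).toNat, by have := hD i (by omega); omega⟩
  have hdl : ∀ k (hk : k + 1 < n), (dl δ k : ℤ) = D k hk := by
    intro k hk
    have := hD k hk
    unfold dl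
    rw [ext0_of_lt _ (by omega : k < n - 1)]
    simp only [δ]
    omega
  have hbn : ∀ (i e : ℕ) (he : i + e < n), (f ⟨i, by omega⟩).side = false →
      (f ⟨i + e, he⟩).side = true → bnN δ i < bnN δ (i + e) := by
    intro i e
    induction e with
    | zero => intro he h1 h2; simp only [add_zero] at h2; rw [h1] at h2; cases h2
    | succ e ih =>
      intro he h1 h2
      have hmono := bnN_mono δ (show i ≤ i + e by omega)
      have hmono' := bnN_mono δ (show i + e ≤ i + (e + 1) by omega)
      cases h3 : (f ⟨i + e, by omega⟩).side with
      | true => exact (ih (by omega) h1 h3).trans_le hmono'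
      | false =>
        have h4 := hdl (i + e) (by omega)
        simp only [D] at h4
        rw [if_neg (by rw [h3]; simp only [add_assoc]; rw [h2]; simp)] at h4
        have := bnN_succ_of δ (k := i + e) (by omega)
        rw [add_assoc] at this
        omega
  let m : ℕ := (univ.filter fun j : Fin n => (f j).side = false).sup fun j => bnN δ j
  have hm : ∀ j : Fin n, (f j).side = decide (m < bnN δ j) := by
    intro j
    cases h : (f j).side with
    | false =>
      have : bnN δ j ≤ m := le_sup (f := fun j : Fin n => bnN δ j) (by simpa using h)
      simpa using this
    | true =>
      have h0 : 0 < bnN δ j := by unfold bnN; omega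
      have : m < bnN δ j := by
        refine (Finset.sup_lt_iff h0).2 fun i hi => ?_
        have hi' : (f i).side = false := by simpa using hi
        have hij : (i : ℕ) ≤ j := by
          by_contra hc
          have := hside j i (by rw [Fin.le_def]; omega) h
          rw [hi'] at this
          cases this
        have := hbn i (j - i) (by omega) hi' (by
          convert h using 3; ext; simp; omega)
        rwa [Nat.add_sub_cancel' hij] at this
      simpa using this
  have hdet : Det δ m (fun j => (f j).a) := by
    intro k hk
    rw [hdl k hk, ext0_of_lt _ hk, ext0_of_lt _ (by omega : k < n)]
    simp only [D]
    rw [hm, hm]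
    simp only [decide_eq_decide]
  let w : Fin n → ℕ := fun j => (univ.filter fun k : Fin n =>
    colS δ k = j ∧ (f k).top = false).sup fun k => (k : ℕ) - j + 1
  have hw : ∀ j : Fin n, (f j).top = decide (ext0 w (colS δ j) ≤ (j : ℕ) - colS δ j) := by
    intro j
    have hle := colS_le δ j
    rw [ext0_of_lt w (by omega)]
    cases h : (f j).top with
    | false =>
      have : (j : ℕ) - colS δ j + 1 ≤ w ⟨colS δ j, by omega⟩ :=
        le_sup (f := fun k : Fin n => (k : ℕ) - colS δ j + 1) (by simpa using h)
      symm
      rw [decide_eq_false_iff_not]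
      omega
    | true =>
      symm
      rw [decide_eq_true_eq]
      refine Finset.sup_le fun i hi => ?_
      obtain ⟨h1, h2⟩ : colS δ i = colS δ j ∧ (f i).top = false := by simpa using hi
      have hle' := colS_le δ i
      -- along a column the label `top` is monotone, so `i` precedes `j`
      have hij : (i : ℕ) < j := by
        by_contra hc
        have hlt : j < i := by
          refine lt_of_le_of_ne (by rw [Fin.le_def]; omega) ?_
          rintro rfl
          rw [h2] at h
          cases h
        have hs : (f j).side = (f i).side := by
          rw [hm, hm, ← bnN_colS hr δ j, ← bnN_colS hr δ i, h1]
        have ha : (f j).a = (f i).a := by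
          have e1 := hdet.a_colS hr j j.2
          have e2 := hdet.a_colS hr i i.2
          rw [ext0_val] at e1 e2
          rw [← e1, ← e2, h1]
        have := (hf j i hlt).1
        rw [LPt.lt_iff, hs, ha, h, h2] at this
        simp [Bool.lt_iff] at this
      simp only
      omega
  refine ⟨δ, m, w, ?_, ?_, hdet, ?_⟩
  · rw [ellStat_eq]
    exact Finset.sup_le fun j _ => bnN_mono δ (by omega)
  · rw [validW_iff]
    refine ⟨fun k hk => ?_, fun j hj => ?_⟩
    · have hle := colS_le δ k
      rw [ext0_of_lt w (by omega)]
      refine Finset.sup_le fun i hi => ?_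
      obtain ⟨h1, h2⟩ : colS δ i = colS δ k ∧ (f i).top = false := by simpa using hi
      have hik : (i : ℕ) ≤ k := by
        by_contra hc
        exact not_of_segStart_le (P := fun i => dl δ i ≠ 0) (k := i) (i := k)
          (h1.trans_le hle) (by omega) (hk (by omega))
      simp only
      omega
    · refine Nat.le_zero.1 (Finset.sup_le fun i hi => ?_)
      obtain ⟨h1, h2⟩ : colS δ i = j ∧ (f i).top = false := by simpa using hi
      exact absurd (by rw [← h1, colS_colS]) hj
  · funext j
    exact LPt.ext (hm j).symm rfl (hw j).symm rfl

lemma vertexToLab_bijective (hn : 1 ≤ n) (hr : 1 ≤ r) (s d1 d2 : ℤ) :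
    Function.Bijective (vertexToLab hn hr s d1 d2) := by
  constructor
  · rintro ⟨⟨⟨δ, m, w⟩, a, b⟩, h1, h2, h3⟩ ⟨⟨⟨δ', m', w'⟩, a', b'⟩, h1', h2', h3'⟩ h
    obtain ⟨rfl, rfl, rfl, rfl, rfl⟩ := vf_injective hn h1 h1' h2 h2'
      ((bridge hn hr s d1 d2 h1 h2).1 h3).1 ((bridge hn hr s d1 d2 h1' h2').1 h3').1
      (congrArg Subtype.val h)
    rfl
  · rintro ⟨f, hf, hok⟩
    obtain ⟨δ, m, w, h1, h2, h3, h4⟩ := vf_surjective hr hf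
    refine ⟨⟨((δ, m, w), fun j => (f j).a, fun j => (f j).b), h1, h2, ?_⟩, Subtype.ext h4⟩
    rw [bridge hn hr s d1 d2 h1 h2, h4]
    exact ⟨h3, hf, hok⟩

end bij

/-- the bijection in the proof of Theorem 4.4 of the paper: there is a
weight-preserving bijection between the disjoint union of the vertex-cone lattice-point
sets `K(δ, m, (m_k))` and the disjoint union of the products
`P^{(1)}_{n_1} × P^{(2)}_{n_2} × P^{(3)}_{n_3} × P^{(4)}_{n_4}` over `n_1+n_2+n_3+n_4 = n`. -/
theorem vertex_cone_bijection (n : ℕ) (hn : 1 ≤ n) (s : ℤ) (hs : 0 ≤ s)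
    (r : ℕ) (hr : 1 ≤ r) (d1 d2 : ℤ) :
    ∃ e : VertexConeSide n r s d1 d2 ≃ ProductSide n (r : ℤ) s d1 d2,
      ∀ x : VertexConeSide n r s d1 d2,
        ((∑ j, x.val.2.1 j) =
            (∑ j, (e x).val.2.1.1 j) + (∑ j, (e x).val.2.2.1.1 j) +
              (∑ j, (e x).val.2.2.2.1.1 j) + (∑ j, (e x).val.2.2.2.2.1 j)) ∧
        ((∑ j, x.val.2.2 j) =
            (∑ j, (e x).val.2.1.2 j) + (∑ j, (e x).val.2.2.1.2 j) +
              (∑ j, (e x).val.2.2.2.1.2 j) + (∑ j, (e x).val.2.2.2.2.2 j)) := by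
  have hr' : (1 : ℤ) ≤ r := by exact_mod_cast hr
  let e₁ := Equiv.ofBijective _ (vertexToLab_bijective hn hr s d1 d2)
  let e₂ := Equiv.ofBijective _ (labToSet_bijective (n := n) (r := r) (s := s) (d1 := d1) (d2 := d2))
  let e₃ := Equiv.ofBijective _
    (prodToSet_bijective (n := n) (s := s) (d1 := d1) (d2 := d2) hr')
  refine ⟨(e₁.trans e₂).trans e₃.symm, fun x => ?_⟩
  have h1 := labToSet_sum (vertexToLab hn hr s d1 d2 x)
  have h2 := prodToSet_sum hr' (((e₁.trans e₂).trans e₃.symm) x)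
  have h3 : prodToSet hr' (((e₁.trans e₂).trans e₃.symm) x) =
      labToSet (vertexToLab hn hr s d1 d2 x) := e₃.apply_symm_apply _
  rw [h3] at h2
  exact ⟨h1.1.symm.trans h2.1, h1.2.symm.trans h2.2⟩

end
end
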